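/- Let Ω ⊂ ℝⁿ be a bounded open set with smooth boundary, T > 0, and let F be continuous, uniformly elliptic with constants 0 < λ ≤ Λ, satisfying the structure condition with constant γ, the joint modulus bound |F(M,P,r,x,t) - F(M,P,r,y,s)| ≤ σ₁(|x-y|) + σ₂(|t-s|) with σ₂(h) ≤ C₀h, and sup_{(x,t)}|F(0,0,0,x,t)| ≤ K. Suppose that for every h ∈ (0,1] the Rothe approximations z_{n,h} exist, and let U_h be the corresponding Rothe interpolants on Ω̄ × [0,T]. Then every sequence h_k ↓ 0 has a subsequence along which U_{h_k} converges uniformly on Ω̄ × [0,T] to a continuous function U, and any such limit U is Lipschitz in time: there is a constant C, independent of the subsequence, with |U(x,t) - U(x,s)| ≤ C|t - s| for all x ∈ Ω̄ and t, s ∈ [0,T]. -/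

import Mathlib

/-!
Every estimate comes from comparing viscosity sub- and supersolutions of two equations
`Gᵢ(D²u, Du, u, x) + u / h = f / h`, by convolution. The sup-convolution of `u` and the
inf-convolution of `v` are convex and concave up to a quadratic, and at suitable maxima of their
difference, perturbed by a small linear function, both have a second-order expansion. Indeed a
maximum forces them to be differentiable at the contact points and their gradients are Lipschitz
there, so that the slopes all of whose contact points lack a second-order expansion form a null set
(Jensen). The expansions are second-order jets of `u` and `v` at nearby points, with ordered
Hessians.

* In time, the first step is bounded by `K h` because constants are test functions, and comparing
  consecutive steps, whose operators differ by `C₀ h`, gives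
  `|zₙ₊₁ - zₙ| ≤ (K + n C₀ h) h ≤ (K + C₀ T) h`.
* At the boundary, a smooth boundary admits exterior balls `B(c, R)` of a uniform radius, and
  `A (exp (-μ R²) - exp (-μ ‖x - c‖²))` is a supersolution for every step, so that
  `|zₙ x| ≤ L ‖x - y‖` for all boundary points `y`, with `L` independent of `n` and `h`.
* In space, `zₙ` is compared with its translate by `ξ`; the boundary estimate controls the
  boundary values and each step adds `h σ ‖ξ‖`, hence
  `|zₙ x - zₙ y| ≤ L ‖x - y‖ + n h σ ‖x - y‖`.

The interpolants inherit these moduli, so they are equicontinuous uniformly in `h`, Arzelà–Ascoli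
yields the subsequence, and the Lipschitz bound in time passes to every pointwise limit.
-/

open scoped RealInnerProductSpace
open MeasureTheory Filter Topology Asymptotics Metric Set

noncomputable section

abbrev Eucl (d : ℕ) := EuclideanSpace ℝ (Fin d)

open Classical in
noncomputable def eigs {d : ℕ} (M : Matrix (Fin d) (Fin d) ℝ) : Fin d → ℝ :=
  if h : M.IsHermitian then h.eigenvalues else 0

noncomputable def specNorm {d : ℕ} (M : Matrix (Fin d) (Fin d) ℝ) : ℝ := ⨆ i, |eigs M i|
noncomputable def posPartNorm {d : ℕ} (M : Matrix (Fin d) (Fin d) ℝ) : ℝ := ⨆ i, max (eigs M i) 0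
noncomputable def negPartNorm {d : ℕ} (M : Matrix (Fin d) (Fin d) ℝ) : ℝ := ⨆ i, max (-(eigs M i)) 0
noncomputable def posPartTrace {d : ℕ} (M : Matrix (Fin d) (Fin d) ℝ) : ℝ := ∑ i, max (eigs M i) 0
noncomputable def negPartTrace {d : ℕ} (M : Matrix (Fin d) (Fin d) ℝ) : ℝ := ∑ i, max (-(eigs M i)) 0

noncomputable def pucciPlus {d : ℕ} (lam Lam : ℝ) (M : Matrix (Fin d) (Fin d) ℝ) : ℝ :=
  -lam * posPartTrace M + Lam * negPartTrace M

noncomputable def pucciMinus {d : ℕ} (lam Lam : ℝ) (M : Matrix (Fin d) (Fin d) ℝ) : ℝ :=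
  -Lam * posPartTrace M + lam * negPartTrace M

noncomputable def gradAt {d : ℕ} (φ : Eucl d → ℝ) (x : Eucl d) : Eucl d :=
  (EuclideanSpace.equiv (Fin d) ℝ).symm (fun i => fderiv ℝ φ x (EuclideanSpace.single i 1))

noncomputable def hessAt {d : ℕ} (φ : Eucl d → ℝ) (x : Eucl d) : Matrix (Fin d) (Fin d) ℝ :=
  Matrix.of fun i j =>
    fderiv ℝ (fun y => fderiv ℝ φ y (EuclideanSpace.single j 1)) x (EuclideanSpace.single i 1)

noncomputable def quadForm {d : ℕ} (M : Matrix (Fin d) (Fin d) ℝ) (v : Eucl d) : ℝ :=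
  ∑ i, ∑ j, M i j * v i * v j

def ViscSubsol {d : ℕ} (Ω : Set (Eucl d))
    (G : Matrix (Fin d) (Fin d) ℝ → Eucl d → ℝ → Eucl d → ℝ)
    (g : Eucl d → ℝ) (u : Eucl d → ℝ) : Prop :=
  ∀ x₀ ∈ Ω, ∀ φ : Eucl d → ℝ, ContDiffAt ℝ 2 φ x₀ →
    IsLocalMax (fun x => u x - φ x) x₀ →
    G (hessAt φ x₀) (gradAt φ x₀) (u x₀) x₀ ≤ g x₀

def ViscSupersol {d : ℕ} (Ω : Set (Eucl d))
    (G : Matrix (Fin d) (Fin d) ℝ → Eucl d → ℝ → Eucl d → ℝ)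
    (g : Eucl d → ℝ) (u : Eucl d → ℝ) : Prop :=
  ∀ x₀ ∈ Ω, ∀ φ : Eucl d → ℝ, ContDiffAt ℝ 2 φ x₀ →
    IsLocalMin (fun x => u x - φ x) x₀ →
    g x₀ ≤ G (hessAt φ x₀) (gradAt φ x₀) (u x₀) x₀

def ViscSol {d : ℕ} (Ω : Set (Eucl d))
    (G : Matrix (Fin d) (Fin d) ℝ → Eucl d → ℝ → Eucl d → ℝ)
    (g : Eucl d → ℝ) (u : Eucl d → ℝ) : Prop :=
  ViscSubsol Ω G g u ∧ ViscSupersol Ω G g u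

def UniformlyElliptic {d : ℕ} (lam Lam : ℝ) (X : Set (Eucl d)) (Tset : Set ℝ)
    (F : Matrix (Fin d) (Fin d) ℝ → Eucl d → ℝ → Eucl d → ℝ → ℝ) : Prop :=
  ∀ M N : Matrix (Fin d) (Fin d) ℝ, M.IsSymm → N.PosSemidef →
    ∀ (P : Eucl d) (v : ℝ), ∀ x ∈ X, ∀ t ∈ Tset,
      -Lam * specNorm N ≤ F (M + N) P v x t - F M P v x t ∧
      F (M + N) P v x t - F M P v x t ≤ -lam * specNorm N

def IsModulus (σ : ℝ → ℝ) : Prop := Monotone σ ∧ Continuous σ ∧ σ 0 = 0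

def StructureCondition {d : ℕ} (lam Lam gam : ℝ) (ω : ℝ → ℝ → ℝ)
    (X : Set (Eucl d)) (Tset : Set ℝ)
    (F : Matrix (Fin d) (Fin d) ℝ → Eucl d → ℝ → Eucl d → ℝ → ℝ) : Prop :=
  (∀ R > 0, IsModulus (ω R)) ∧
  ∀ R > 0, ∀ M N : Matrix (Fin d) (Fin d) ℝ, M.IsSymm → N.IsSymm →
    ∀ (P Q : Eucl d) (r s : ℝ), |r| ≤ R → |s| ≤ R → ∀ x ∈ X, ∀ t ∈ Tset,
      pucciMinus lam Lam (M - N) - gam * ‖P - Q‖ - ω R (max (s - r) 0)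
          ≤ F M P r x t - F N Q s x t ∧
      F M P r x t - F N Q s x t
          ≤ pucciPlus lam Lam (M - N) + gam * ‖P - Q‖ + ω R (max (r - s) 0)

noncomputable def supConv {d : ℕ} (Ω : Set (Eucl d)) (u : Eucl d → ℝ) (ε : ℝ) (x : Eucl d) : ℝ :=
  sSup ((fun y => u y - ‖x - y‖ ^ 2 / (2 * ε)) '' closure Ω)

noncomputable def infConv {d : ℕ} (Ω : Set (Eucl d)) (u : Eucl d → ℝ) (ε : ℝ) (x : Eucl d) : ℝ :=
  sInf ((fun y => u y + ‖x - y‖ ^ 2 / (2 * ε)) '' closure Ω)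

noncomputable def supNorm {d : ℕ} (Ω : Set (Eucl d)) (u : Eucl d → ℝ) : ℝ :=
  sSup ((fun y => |u y|) '' closure Ω)

def RotheStep {d : ℕ} (Ω : Set (Eucl d))
    (F : Matrix (Fin d) (Fin d) ℝ → Eucl d → ℝ → Eucl d → ℝ → ℝ)
    (h : ℝ) (m : ℕ) (zprev znext : Eucl d → ℝ) : Prop :=
  ContinuousOn znext (closure Ω) ∧
  ViscSol Ω (fun M P r x => F M P r x ((m + 1) * h) + r / h) (fun x => zprev x / h) znext ∧
  ∀ x ∈ frontier Ω, znext x = 0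

noncomputable def rotheInterp {d : ℕ} (z : ℕ → Eucl d → ℝ) (h : ℝ) (x : Eucl d) (t : ℝ) : ℝ :=
  ((⌊t / h⌋₊ + 1 : ℝ) * h - t) / h * z ⌊t / h⌋₊ x + (t - (⌊t / h⌋₊ : ℝ) * h) / h * z (⌊t / h⌋₊ + 1) x

def HasSmoothBoundary {d : ℕ} (Ω : Set (Eucl d)) : Prop :=
  ∃ f : Eucl d → ℝ, ContDiff ℝ (⊤ : ℕ∞) f ∧ Ω = {x | f x < 0} ∧ ∀ x ∈ frontier Ω, fderiv ℝ f x ≠ 0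

def C21 {d : ℕ} (φ : Eucl d → ℝ → ℝ) : Prop :=
  (∀ t, ContDiff ℝ 2 fun x => φ x t) ∧
  (∀ x, ContDiff ℝ 1 fun t => φ x t) ∧
  Continuous (fun p : Eucl d × ℝ => φ p.1 p.2) ∧
  Continuous (fun p : Eucl d × ℝ => hessAt (fun x => φ x p.2) p.1) ∧
  Continuous (fun p : Eucl d × ℝ => gradAt (fun x => φ x p.2) p.1) ∧
  Continuous (fun p : Eucl d × ℝ => deriv (φ p.1) p.2)

def ParabolicViscSubsol {d : ℕ} (Ω : Set (Eucl d)) (T : ℝ)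
    (F : Matrix (Fin d) (Fin d) ℝ → Eucl d → ℝ → Eucl d → ℝ → ℝ)
    (u : Eucl d × ℝ → ℝ) : Prop :=
  ∀ φ : Eucl d → ℝ → ℝ, C21 φ → ∀ ε > (0:ℝ),
    (∀ x ∈ closure Ω, ∀ t ∈ Icc (0:ℝ) T,
      ε ≤ deriv (φ x) t +
        F (hessAt (fun y => φ y t) x) (gradAt (fun y => φ y t) x) (φ x t) x t) →
    ¬ ∃ p ∈ Ω ×ˢ Ioc (0:ℝ) T,
        IsLocalMaxOn (fun q : Eucl d × ℝ => u q - φ q.1 q.2) (Ω ×ˢ Ioc (0:ℝ) T) p ∧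
        u p - φ p.1 p.2 = 0

def ParabolicViscSupersol {d : ℕ} (Ω : Set (Eucl d)) (T : ℝ)
    (F : Matrix (Fin d) (Fin d) ℝ → Eucl d → ℝ → Eucl d → ℝ → ℝ)
    (u : Eucl d × ℝ → ℝ) : Prop :=
  ∀ φ : Eucl d → ℝ → ℝ, C21 φ → ∀ ε > (0:ℝ),
    (∀ x ∈ closure Ω, ∀ t ∈ Icc (0:ℝ) T,
      deriv (φ x) t +
        F (hessAt (fun y => φ y t) x) (gradAt (fun y => φ y t) x) (φ x t) x t ≤ -ε) →
    ¬ ∃ p ∈ Ω ×ˢ Ioc (0:ℝ) T,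
        IsLocalMinOn (fun q : Eucl d × ℝ => u q - φ q.1 q.2) (Ω ×ˢ Ioc (0:ℝ) T) p ∧
        u p - φ p.1 p.2 = 0

/-! ### Second-order expansions of convex functions -/

section Convex

variable {V : Type*} [NormedAddCommGroup V] [InnerProductSpace ℝ V]
  {f g : V → ℝ} {a b : V → V} {c q x z : V} {κ : ℝ}

/-- `a` selects a subgradient of `f` at every point; `f` is then convex. -/
def IsSubgradientField (f : V → ℝ) (a : V → V) : Prop :=
  ∀ x y, f x + ⟪a x, y - x⟫ ≤ f y

/-- `f` lies below the paraboloid of opening `κ` and slope `c` that agrees with it at `x`. -/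
def TouchedByParaboloid (f : V → ℝ) (κ : ℝ) (c x : V) : Prop :=
  ∀ y, f y ≤ f x + ⟪c, y - x⟫ + κ / 2 * ‖y - x‖ ^ 2

/-- Second-order Taylor expansion of `f` at `x` with slope `c` and Hessian form
`w ↦ ⟪S w, w⟫`. No derivative of `f` is required to exist away from `x`. -/
def HasSecondOrderExpansion (f : V → ℝ) (c : V) (S : V →L[ℝ] V) (x : V) : Prop :=
  (fun y => f y - f x - ⟪c, y - x⟫ - ⟪S (y - x), y - x⟫ / 2) =o[𝓝 x] fun y => ‖y - x‖ ^ 2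

theorem IsSubgradientField.add (hf : IsSubgradientField f a) (hg : IsSubgradientField g b) :
    IsSubgradientField (f + g) (a + b) := fun x y => by
  simp only [Pi.add_apply, inner_add_left]
  linarith [hf x y, hg x y]

theorem touchedByParaboloid_smul_add_iff :
    TouchedByParaboloid f κ (κ • x + q) x ↔
      ∀ y, f y - κ / 2 * ‖y‖ ^ 2 - ⟪q, y⟫ ≤ f x - κ / 2 * ‖x‖ ^ 2 - ⟪q, x⟫ := by
  refine forall_congr' fun y => ?_
  rw [norm_sub_sq_real, inner_add_left, real_inner_smul_left, inner_sub_right, inner_sub_right,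
    real_inner_self_eq_norm_sq, real_inner_comm x y]
  constructor <;> intro h <;> linarith

theorem TouchedByParaboloid.of_add (hg : IsSubgradientField g b)
    (h : TouchedByParaboloid (f + g) κ c x) : TouchedByParaboloid f κ (c - b x) x := fun y => by
  have hy := h y
  simp only [Pi.add_apply] at hy
  rw [inner_sub_left]
  linarith [hg x y]

theorem IsSubgradientField.norm_sub_le_of_touched (hf : IsSubgradientField f a) (hκ : 0 < κ)
    (hx : TouchedByParaboloid f κ c x) (hz : f x + ⟪c, z - x⟫ ≤ f z) :
    ‖a z - c‖ ≤ 2 * κ * ‖z - x‖ := by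
  set e := a z - c with he
  -- At `x + e / κ` the paraboloid is lowest relative to the supporting plane at `z`.
  have hlow := hf z (x + κ⁻¹ • e)
  have hup := hx (x + κ⁻¹ • e)
  have haz : a z = c + e := by rw [he]; abel
  have hsplit : x + κ⁻¹ • e - z = κ⁻¹ • e - (z - x) := by abel
  rw [hsplit, haz, inner_add_left, inner_sub_right, inner_sub_right e, real_inner_smul_right,
    real_inner_smul_right, real_inner_self_eq_norm_sq] at hlow
  rw [add_sub_cancel_left, real_inner_smul_right, norm_smul, Real.norm_of_nonneg (by positivity),
    show κ / 2 * (κ⁻¹ * ‖e‖) ^ 2 = κ⁻¹ * ‖e‖ ^ 2 / 2 by field_simp] at hup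
  have hsq : κ⁻¹ * ‖e‖ ^ 2 ≤ 2 * (‖e‖ * ‖z - x‖) := by linarith [real_inner_le_norm e (z - x)]
  rw [inv_mul_le_iff₀ hκ] at hsq
  rcases (norm_nonneg e).eq_or_lt with h0 | hpos
  · rw [← h0]; positivity
  · exact le_of_mul_le_mul_left (by linarith) hpos

theorem IsSubgradientField.eq_of_touched (hf : IsSubgradientField f a) (hκ : 0 < κ)
    (hx : TouchedByParaboloid f κ c x) : a x = c := by
  simpa [sub_eq_zero] using hf.norm_sub_le_of_touched hκ hx (z := x) (by simp)

theorem abs_sub_le_of_abs_sub_le_add_sq {φ : ℝ → ℝ} {ε C : ℝ}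
    (hφ : ∀ s ∈ Icc (0 : ℝ) 1, ∀ t ∈ Icc (0 : ℝ) 1, |φ s - φ t| ≤ ε * |s - t| + C * (s - t) ^ 2) :
    |φ 1 - φ 0| ≤ ε := by
  have hN : ∀ N : ℕ, |φ 1 - φ 0| ≤ ε + C * (1 / ((N : ℝ) + 1)) := by
    intro N
    have hpos : (0 : ℝ) < N + 1 := by positivity
    have hsum := dist_le_range_sum_of_dist_le (f := fun k : ℕ => φ (k / (N + 1))) (N + 1)
      (d := fun _ => ε * (1 / (N + 1)) + C * (1 / (N + 1)) ^ 2) fun {k} hk => by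
        have hk' : (k : ℝ) + 1 ≤ N + 1 := by exact_mod_cast hk
        have h := hφ (k / (N + 1)) ⟨by positivity, (div_le_one hpos).2 (by linarith)⟩
          ((k + 1 : ℕ) / (N + 1)) ⟨by positivity, (div_le_one hpos).2 (by push_cast; linarith)⟩
        have hstep : (k : ℝ) / (N + 1) - ((k + 1 : ℕ) : ℝ) / (N + 1) = -(1 / (N + 1)) := by
          push_cast; ring
        rwa [hstep, abs_neg, neg_sq, abs_of_pos (one_div_pos.2 hpos)] at h
    simp only [Finset.sum_const, Finset.card_range, nsmul_eq_mul, Nat.cast_add, Nat.cast_one,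
      Nat.cast_zero, zero_div, div_self hpos.ne'] at hsum
    rw [abs_sub_comm, ← Real.dist_eq]
    refine hsum.trans_eq ?_
    field_simp
  have hlim : Tendsto (fun N : ℕ => ε + C * (1 / ((N : ℝ) + 1))) atTop (𝓝 ε) := by
    simpa using (tendsto_one_div_add_atTop_nhds_zero_nat (𝕜 := ℝ)).const_mul C |>.const_add ε
  exact ge_of_tendsto' hlim hN

theorem abs_taylor_two_le_of_subgradient {φ σ : ℝ → ℝ} {α β ε : ℝ}
    (hφ : ∀ t ∈ Icc (0 : ℝ) 1, ∀ s ∈ Icc (0 : ℝ) 1, φ t + σ t * (s - t) ≤ φ s)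
    (hσ : ∀ t ∈ Icc (0 : ℝ) 1, |σ t - α - β * t| ≤ ε) :
    |φ 1 - φ 0 - α - β / 2| ≤ ε := by
  have h := abs_sub_le_of_abs_sub_le_add_sq (φ := fun t => φ t - α * t - β / 2 * t ^ 2)
    (ε := ε) (C := |β| / 2) fun s hs t ht => by
      have hslope : ∀ r ∈ Icc (0 : ℝ) 1, |(σ r - α - β * r) * (s - t)| ≤ ε * |s - t| :=
        fun r hr => by rw [abs_mul]; exact mul_le_mul_of_nonneg_right (hσ r hr) (abs_nonneg _)
      have hβ : |β / 2 * (s - t) ^ 2| ≤ |β| / 2 * (s - t) ^ 2 := by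
        rw [abs_mul, abs_div, abs_two, abs_sq]
      have hlow := hφ t ht s hs
      have hup := hφ s hs t ht
      rw [abs_le] at hβ ⊢
      constructor
      · linear_combination hlow + (abs_le.1 (hslope t ht)).1 + hβ.2
      · linear_combination hup + (abs_le.1 (hslope s hs)).2 + hβ.2
  convert h using 2
  ring

theorem IsSubgradientField.hasSecondOrderExpansion (hf : IsSubgradientField f a)
    {S : V →L[ℝ] V} (hS : HasFDerivAt a S x) : HasSecondOrderExpansion f (a x) S x := by
  refine IsLittleO.of_bound fun ε hε => ?_
  obtain ⟨ρ, hρ, hball⟩ := Metric.eventually_nhds_iff.1 (hS.isLittleO.def hε)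
  filter_upwards [ball_mem_nhds x hρ] with y hy
  set v := y - x with hv
  have htaylor := abs_taylor_two_le_of_subgradient (φ := fun t => f (x + t • v))
    (σ := fun t => ⟪a (x + t • v), v⟫) (α := ⟪a x, v⟫) (β := ⟪S v, v⟫) (ε := ε * ‖v‖ ^ 2)
    (fun t _ s _ => ?_) (fun t ht => ?_)
  · simpa [hv] using htaylor
  · have h := hf (x + t • v) (x + s • v)
    rw [add_sub_add_left_eq_sub, ← sub_smul, real_inner_smul_right] at h
    linarith
  · have htv : ‖t • v‖ ≤ ‖v‖ := by
      rw [norm_smul, Real.norm_of_nonneg ht.1]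
      exact mul_le_of_le_one_left (norm_nonneg _) ht.2
    have h := hball (y := x + t • v) (by
      rw [dist_eq_norm, add_sub_cancel_left]
      exact htv.trans_lt (by rwa [mem_ball, dist_eq_norm] at hy))
    rw [add_sub_cancel_left] at h
    have hlin : ⟪a (x + t • v), v⟫ - ⟪a x, v⟫ - ⟪S v, v⟫ * t
        = ⟪a (x + t • v) - a x - S (t • v), v⟫ := by
      rw [map_smul, inner_sub_left, inner_sub_left, real_inner_smul_left]; ring
    rw [hlin]
    calc _ ≤ ‖a (x + t • v) - a x - S (t • v)‖ * ‖v‖ := abs_real_inner_le_norm _ _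
      _ ≤ ε * ‖v‖ * ‖v‖ := by gcongr; exact h.trans (by gcongr)
      _ = ε * ‖v‖ ^ 2 := by ring

theorem HasSecondOrderExpansion.add {c' : V} {S S' : V →L[ℝ] V}
    (hf : HasSecondOrderExpansion f c S x) (hg : HasSecondOrderExpansion g c' S' x) :
    HasSecondOrderExpansion (f + g) (c + c') (S + S') x := by
  refine (IsLittleO.add hf hg).congr_left fun y => ?_
  simp only [Pi.add_apply, add_apply, inner_add_left]
  ring

theorem HasSecondOrderExpansion.inner_le_of_touched {S : V →L[ℝ] V}
    (hf : HasSecondOrderExpansion f c S x) (hx : TouchedByParaboloid f κ c x) (w : V) :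
    ⟪S w, w⟫ ≤ κ * ‖w‖ ^ 2 := by
  have hline : Tendsto (fun t : ℝ => x + t • w) (𝓝[≠] 0) (𝓝 x) := by
    have h : Continuous fun t : ℝ => x + t • w := by fun_prop
    simpa using (h.tendsto 0).mono_left (nhdsWithin_le_nhds (s := {0}ᶜ))
  have hbound : ∀ ε > 0, ⟪S w, w⟫ - κ * ‖w‖ ^ 2 ≤ ε * (2 * ‖w‖ ^ 2) := by
    intro ε hε
    obtain ⟨t, ht, ht0⟩ := ((hline.eventually (hf.def hε)).and self_mem_nhdsWithin).exists
    have htouch := hx (x + t • w)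
    have ht2 : 0 < t ^ 2 := pow_two_pos_of_ne_zero ht0
    simp only [add_sub_cancel_left, map_smul, real_inner_smul_left, real_inner_smul_right,
      norm_smul, mul_pow, Real.norm_eq_abs, sq_abs, abs_mul, abs_sq] at ht htouch
    refine le_of_mul_le_mul_left ?_ ht2
    linarith [(abs_le.1 ht).1]
  have hlim : Tendsto (fun ε : ℝ => ε * (2 * ‖w‖ ^ 2)) (𝓝[>] 0) (𝓝 0) := by
    have h : Continuous fun ε : ℝ => ε * (2 * ‖w‖ ^ 2) := by fun_prop
    simpa using (h.tendsto 0).mono_left (nhdsWithin_le_nhds (s := Ioi 0))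
  linarith [ge_of_tendsto hlim (eventually_mem_nhdsWithin.mono hbound)]

end Convex

section Alexandrov

theorem ae_eventually_exists_dist_le {X : Type*} [MetricSpace X] [SecondCountableTopology X]
    [MeasurableSpace X] [BorelSpace X] (μ : Measure X) [IsUnifLocDoublingMeasure μ]
    [IsLocallyFiniteMeasure μ] (E : Set X) :
    ∀ᵐ x ∂μ, x ∈ E → ∀ ε > 0, ∀ᶠ z in 𝓝 x, ∃ y ∈ E, dist z y ≤ ε * dist z x := by
  have hnat : ∀ᵐ x ∂μ, x ∈ E → ∀ n : ℕ, ∀ᶠ z in 𝓝[≠] x, ∃ y ∈ E, dist z y ≤ dist z x / (n + 1) := by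
    refine ae_imp_of_ae_restrict (ae_all_iff.2 fun n => ?_)
    filter_upwards [IsUnifLocDoublingMeasure.ae_tendsto_measure_inter_div μ E (n + 1)] with x hx
    have hδ : Tendsto (fun z => dist z x / (n + 1)) (𝓝[≠] x) (𝓝[>] 0) := by
      refine tendsto_nhdsWithin_iff.2 ⟨?_, eventually_mem_nhdsWithin.mono fun z hz => ?_⟩
      · have h : Continuous fun z => dist z x / ((n : ℝ) + 1) := by fun_prop
        simpa using (h.tendsto x).mono_left (nhdsWithin_le_nhds (s := {x}ᶜ))
      · exact div_pos (dist_pos.2 hz) (by positivity)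
    have hlim := hx id _ hδ (Eventually.of_forall fun z => by
      rw [mem_closedBall, dist_comm, mul_div_cancel₀ _ (by positivity)]; rfl)
    -- The density of `E` in the small ball around `z` tends to one, so that ball meets `E`.
    filter_upwards [hlim.eventually_ne one_ne_zero] with z hz
    obtain ⟨y, hyE, hy⟩ : (E ∩ closedBall z (dist z x / (n + 1))).Nonempty := by
      by_contra hempty
      exact hz (by simp [not_nonempty_iff_eq_empty.1 hempty])
    exact ⟨y, hyE, by rwa [mem_closedBall'] at hy⟩
  filter_upwards [hnat] with x hx hxE ε hε
  obtain ⟨n, hn⟩ := exists_nat_one_div_lt hε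
  filter_upwards [eventually_nhdsWithin_iff.1 (hx hxE n)] with z hz
  rcases eq_or_ne z x with rfl | hzx
  · exact ⟨z, hxE, by simp⟩
  · obtain ⟨y, hy, hzy⟩ := hz hzx
    refine ⟨y, hy, hzy.trans ?_⟩
    rw [div_eq_inv_mul, ← one_div]
    gcongr

theorem ae_differentiableAt_of_dist_le {V W : Type*} [NormedAddCommGroup V] [NormedSpace ℝ V]
    [FiniteDimensional ℝ V] [MeasurableSpace V] [BorelSpace V] [NormedAddCommGroup W]
    [NormedSpace ℝ W] [FiniteDimensional ℝ W] (μ : Measure V) [μ.IsAddHaarMeasure] {f : V → W}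
    {E : Set V} {C : NNReal} (hf : ∀ x ∈ E, ∀ z, dist (f z) (f x) ≤ C * dist z x) :
    ∀ᵐ x ∂μ, x ∈ E → DifferentiableAt ℝ f x := by
  obtain ⟨G, hG, hfG⟩ := (LipschitzOnWith.of_dist_le_mul
    fun z _ x hx => hf x hx z : LipschitzOnWith C f E).extend_finite_dimension
  set L := lipschitzExtensionConstant W * C
  filter_upwards [hG.ae_differentiableAt (μ := μ), ae_eventually_exists_dist_le μ E]
    with x hGx hdense hx
  -- `f - G` vanishes on `E` and is Lipschitz at its points, so it is `o(‖z - x‖)` where `E` is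
  -- dense in measure.
  have hdiff : HasFDerivAt (f - G) (0 : V →L[ℝ] W) x := by
    refine .of_isLittleO (IsLittleO.of_bound fun ε hε => ?_)
    filter_upwards [hdense hx (ε / (C + L + 1)) (by positivity)] with z ⟨y, hy, hzy⟩
    have hbound : dist (f z) (G z) ≤ (C + L) * dist z y := by
      calc dist (f z) (G z) ≤ dist (f z) (f y) + dist (f y) (G z) := dist_triangle _ _ _
        _ ≤ C * dist z y + L * dist z y := by
          rw [hfG hy, dist_comm (G y)]
          exact add_le_add (hfG hy ▸ hf y hy z) (hG.dist_le_mul z y)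
        _ = (C + L) * dist z y := by ring
    have hε' : (C + L) * (ε / (C + L + 1)) ≤ ε := by
      rw [mul_div_assoc', div_le_iff₀ (by positivity)]
      linarith
    simp only [Pi.sub_apply, hfG hx, sub_self, sub_zero, zero_apply, ← dist_eq_norm]
    calc dist (f z) (G z) ≤ (C + L) * (ε / (C + L + 1) * dist z x) := hbound.trans (by gcongr)
      _ ≤ ε * dist z x := by rw [← mul_assoc]; gcongr
  simpa using (hdiff.differentiableAt.add hGx)

variable {V : Type*} [NormedAddCommGroup V] [InnerProductSpace ℝ V] [FiniteDimensional ℝ V]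
  [MeasurableSpace V] [BorelSpace V] {f g : V → ℝ} {a b : V → V} {κ : ℝ}

theorem IsSubgradientField.ae_hasSecondOrderExpansion (μ : Measure V) [μ.IsAddHaarMeasure]
    (hf : IsSubgradientField f a) (hκ : 0 < κ) {E : Set V}
    (hE : ∀ x ∈ E, TouchedByParaboloid f κ (a x) x) :
    ∀ᵐ x ∂μ, x ∈ E → ∃ S, HasSecondOrderExpansion f (a x) S x := by
  have hlip : ∀ x ∈ E, ∀ z, dist (a z) (a x) ≤ (2 * κ).toNNReal * dist z x := fun x hx z => by
    rw [dist_eq_norm, dist_eq_norm, Real.coe_toNNReal _ (by positivity)]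
    exact hf.norm_sub_le_of_touched hκ (hE x hx) (hf x z)
  filter_upwards [ae_differentiableAt_of_dist_le μ hlip] with x hx hxE
  exact ⟨_, hf.hasSecondOrderExpansion (hx hxE).hasFDerivAt⟩

/-- **Jensen's lemma**. -/
theorem IsSubgradientField.exists_touchedByParaboloid_notMem (hf : IsSubgradientField f a)
    (hκ : 0 < κ) (hmax : ∀ q, ∃ x, TouchedByParaboloid f κ (κ • x + q) x) {N : Set V}
    (hN : μH[Module.finrank ℝ V] N = 0) {r : ℝ} (hr : 0 < r) :
    ∃ q x, ‖q‖ < r ∧ TouchedByParaboloid f κ (κ • x + q) x ∧ x ∉ N := by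
  set μ : Measure V := μH[Module.finrank ℝ V] with hμ
  have : μ.IsAddHaarMeasure := isAddHaarMeasure_hausdorffMeasure
  set E := {x | ∃ q, TouchedByParaboloid f κ (κ • x + q) x}
  -- A contact point determines its slope, in a Lipschitz manner.
  have hslope : LipschitzOnWith (3 * κ).toNNReal (fun x => a x - κ • x) E := by
    refine LipschitzOnWith.of_dist_le_mul fun z _ x ⟨q, hq⟩ => ?_
    have hax := hf.eq_of_touched hκ hq
    have h := hf.norm_sub_le_of_touched hκ (hax ▸ hq) (hf x z)
    rw [dist_eq_norm, dist_eq_norm, Real.coe_toNNReal _ (by positivity)]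
    calc ‖a z - κ • z - (a x - κ • x)‖ = ‖a z - a x - κ • (z - x)‖ := by
          rw [smul_sub]; congr 1; abel
      _ ≤ ‖a z - a x‖ + κ * ‖z - x‖ := by
          refine (norm_sub_le _ _).trans_eq ?_
          rw [norm_smul, Real.norm_of_nonneg hκ.le]
      _ ≤ 3 * κ * ‖z - x‖ := by linarith
  have hnull : μ ((fun x => a x - κ • x) '' (N ∩ E)) = 0 := by
    have h := (hslope.mono inter_subset_right).hausdorffMeasure_image_le (s := N ∩ E)
      (d := (Module.finrank ℝ V : ℝ)) (by positivity)
    rw [← hμ, measure_mono_null inter_subset_left hN, mul_zero] at h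
    exact le_antisymm h zero_le
  obtain ⟨q, hq, hqN⟩ := not_subset.1 fun h : ball (0 : V) r ⊆ _ =>
    (measure_ball_pos μ (0 : V) hr).ne' (measure_mono_null h hnull)
  obtain ⟨x, hx⟩ := hmax q
  refine ⟨q, x, by simpa using hq, hx, fun hxN => hqN ⟨x, ⟨hxN, q, hx⟩, ?_⟩⟩
  simp [hf.eq_of_touched hκ hx]

theorem IsSubgradientField.exists_hasSecondOrderExpansion_of_touched_add
    (hf : IsSubgradientField f a) (hg : IsSubgradientField g b) (hκ : 0 < κ)
    (hmax : ∀ q, ∃ x, TouchedByParaboloid (f + g) κ (κ • x + q) x) {r : ℝ} (hr : 0 < r) :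
    ∃ q x S T, ‖q‖ < r ∧ TouchedByParaboloid (f + g) κ (κ • x + q) x ∧
      HasSecondOrderExpansion f (a x) S x ∧ HasSecondOrderExpansion g (b x) T x := by
  have hfg := hf.add hg
  set E := {x | TouchedByParaboloid (f + g) κ (a x + b x) x}
  have : (μH[Module.finrank ℝ V] : Measure V).IsAddHaarMeasure :=
    isAddHaarMeasure_hausdorffMeasure
  have hfE := hf.ae_hasSecondOrderExpansion μH[Module.finrank ℝ V] hκ (E := E) fun x hx => by
    simpa using TouchedByParaboloid.of_add hg hx
  have hgE := hg.ae_hasSecondOrderExpansion μH[Module.finrank ℝ V] hκ (E := E) fun x hx => by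
    rw [mem_ofPred_eq, add_comm f] at hx
    simpa using TouchedByParaboloid.of_add hf hx
  obtain ⟨q, x, hq, hx, hxN⟩ :=
    hfg.exists_touchedByParaboloid_notMem hκ hmax (ae_iff.1 (hfE.and hgE)) hr
  have hxE : x ∈ E := by rwa [mem_ofPred_eq, ← Pi.add_apply, hfg.eq_of_touched hκ hx]
  rw [mem_ofPred_eq, not_not] at hxN
  obtain ⟨S, hS⟩ := hxN.1 hxE
  obtain ⟨T, hT⟩ := hxN.2 hxE
  exact ⟨q, x, S, T, hq, hx, hS, hT⟩

end Alexandrov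

/-! ### Test functions and second-order jets -/

section TestFunctions

variable {d : ℕ} {φ : Eucl d → ℝ} {x : Eucl d}

theorem gradAt_eq_of_hasGradientAt {p : Eucl d} (h : HasGradientAt φ p x) : gradAt φ x = p := by
  ext i
  simp [gradAt, h.hasFDerivAt.fderiv, EuclideanSpace.inner_single_right]

theorem hessAt_apply_of_hasGradientAt {g : Eucl d → Eucl d} {L : Eucl d →L[ℝ] Eucl d}
    (hφ : ∀ᶠ y in 𝓝 x, HasGradientAt φ (g y) y) (hg : HasFDerivAt g L x) (i j : Fin d) :
    hessAt φ x i j = L (EuclideanSpace.single i 1) j := by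
  have hpartial : (fun y => fderiv ℝ φ y (EuclideanSpace.single j 1)) =ᶠ[𝓝 x] fun y => g y j := by
    filter_upwards [hφ] with y hy
    simp [hy.hasFDerivAt.fderiv, EuclideanSpace.inner_single_right]
  have hgj : HasFDerivAt (fun y => g y j) ((EuclideanSpace.proj j).comp L) x :=
    (EuclideanSpace.proj (𝕜 := ℝ) j).hasFDerivAt.comp x hg
  simp [hessAt, hpartial.fderiv_eq, hgj.fderiv]

theorem gradAt_neg (φ : Eucl d → ℝ) (x : Eucl d) : gradAt (fun y => -φ y) x = -gradAt φ x := by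
  ext i
  simp [gradAt]

theorem hessAt_neg (φ : Eucl d → ℝ) (x : Eucl d) : hessAt (fun y => -φ y) x = -hessAt φ x := by
  ext i j
  simp [hessAt]

theorem gradAt_comp_sub (φ : Eucl d → ℝ) (x ξ : Eucl d) :
    gradAt (fun y => φ (y - ξ)) x = gradAt φ (x - ξ) := by
  simp [gradAt, fderiv_comp_sub]

theorem hessAt_comp_sub (φ : Eucl d → ℝ) (x ξ : Eucl d) :
    hessAt (fun y => φ (y - ξ)) x = hessAt φ (x - ξ) := by
  ext i j
  simp only [hessAt, Matrix.of_apply, fderiv_comp_sub]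
  rw [fderiv_comp_sub (f := fun y => fderiv ℝ φ y (EuclideanSpace.single j 1))]

end TestFunctions

section QuadForm

variable {d : ℕ}

theorem quadForm_eq_inner (X : Matrix (Fin d) (Fin d) ℝ) (w : Eucl d) :
    quadForm X w = ⟪Matrix.toEuclideanCLM (𝕜 := ℝ) X w, w⟫ := by
  simp only [quadForm, PiLp.inner_apply, Matrix.ofLp_toEuclideanCLM, Matrix.mulVec, dotProduct,
    Finset.mul_sum, RCLike.inner_apply, conj_trivial]
  exact Finset.sum_congr rfl fun i _ => Finset.sum_congr rfl fun j _ => by ring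

theorem quadForm_neg (X : Matrix (Fin d) (Fin d) ℝ) (w : Eucl d) :
    quadForm (-X) w = -quadForm X w := by
  simp [quadForm_eq_inner]

theorem isSelfAdjoint_toEuclideanCLM {X : Matrix (Fin d) (Fin d) ℝ} (hX : X.IsSymm) :
    IsSelfAdjoint (Matrix.toEuclideanCLM (𝕜 := ℝ) X) := by
  have h : IsSelfAdjoint X := by
    rwa [isSelfAdjoint_iff, Matrix.star_eq_conjTranspose,
      Matrix.conjTranspose_eq_transpose_of_trivial]
  exact h.map _

theorem quadForm_transpose (X : Matrix (Fin d) (Fin d) ℝ) (w : Eucl d) :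
    quadForm X.transpose w = quadForm X w := by
  simp only [quadForm, Matrix.transpose_apply]
  rw [Finset.sum_comm]
  simp only [mul_right_comm]

theorem exists_isSymm_quadForm_eq (S : Eucl d →L[ℝ] Eucl d) :
    ∃ X : Matrix (Fin d) (Fin d) ℝ, X.IsSymm ∧ ∀ w, quadForm X w = ⟪S w, w⟫ := by
  obtain ⟨M, rfl⟩ : ∃ M, Matrix.toEuclideanCLM (𝕜 := ℝ) M = S :=
    ⟨_, (Matrix.toEuclideanCLM (𝕜 := ℝ)).apply_symm_apply S⟩
  refine ⟨(2⁻¹ : ℝ) • (M + M.transpose), (Matrix.isSymm_add_transpose_self M).smul _, fun w => ?_⟩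
  have hT := quadForm_transpose M w
  simp only [quadForm_eq_inner, map_smul, map_add, smul_apply, add_apply, real_inner_smul_left,
    inner_add_left] at hT ⊢
  rw [hT]
  ring

theorem hasGradientAt_quadratic {X : Matrix (Fin d) (Fin d) ℝ} (hX : X.IsSymm) (a : ℝ)
    (p x₀ x : Eucl d) :
    HasGradientAt (fun y => a + ⟪p, y - x₀⟫ + quadForm X (y - x₀) / 2)
      (p + Matrix.toEuclideanCLM (𝕜 := ℝ) X (x - x₀)) x := by
  have hid : HasFDerivAt (fun y : Eucl d => y - x₀) (ContinuousLinearMap.id ℝ _) x :=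
    (hasFDerivAt_id x).sub_const x₀
  have hlin := (hasFDerivAt_const p x).inner ℝ hid
  have hquad := ((Matrix.toEuclideanCLM (𝕜 := ℝ) X).hasFDerivAt.comp x hid).inner ℝ hid
  rw [hasGradientAt_iff_hasFDerivAt]
  simp only [quadForm_eq_inner, div_eq_mul_inv]
  refine ((hlin.const_add a).add (hquad.mul_const 2⁻¹)).congr_fderiv ?_
  ext v
  have hsymm : ⟪Matrix.toEuclideanCLM (𝕜 := ℝ) X v, x - x₀⟫
      = ⟪Matrix.toEuclideanCLM (𝕜 := ℝ) X (x - x₀), v⟫ :=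
    ((isSelfAdjoint_toEuclideanCLM hX).isSymmetric v (x - x₀)).trans (real_inner_comm _ _)
  simp only [add_apply, smul_apply, ContinuousLinearMap.comp_apply, ContinuousLinearMap.prod_apply,
    fderivInnerCLM_apply, Function.comp_apply, zero_apply, ContinuousLinearMap.id_apply,
    inner_zero_left, add_zero, InnerProductSpace.toDual_apply_apply, inner_add_left, smul_eq_mul,
    hsymm]
  ring

theorem contDiff_quadratic (X : Matrix (Fin d) (Fin d) ℝ) (a : ℝ) (p x₀ : Eucl d) :
    ContDiff ℝ 2 fun x => a + ⟪p, x - x₀⟫ + quadForm X (x - x₀) / 2 := by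
  simp only [quadForm_eq_inner]
  have hsub : ContDiff ℝ 2 fun x => x - x₀ := by fun_prop
  exact (contDiff_const.add (contDiff_const.inner ℝ hsub)).add
    ((((Matrix.toEuclideanCLM (𝕜 := ℝ) X).contDiff.comp hsub).inner ℝ hsub).div_const 2)

theorem gradAt_quadratic {X : Matrix (Fin d) (Fin d) ℝ} (hX : X.IsSymm) (a : ℝ)
    (p x₀ : Eucl d) : gradAt (fun x => a + ⟪p, x - x₀⟫ + quadForm X (x - x₀) / 2) x₀ = p := by
  simpa using gradAt_eq_of_hasGradientAt (hasGradientAt_quadratic hX a p x₀ x₀)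

theorem hessAt_quadratic {X : Matrix (Fin d) (Fin d) ℝ} (hX : X.IsSymm) (a : ℝ)
    (p x₀ : Eucl d) : hessAt (fun x => a + ⟪p, x - x₀⟫ + quadForm X (x - x₀) / 2) x₀ = X := by
  have hg : HasFDerivAt (fun x => p + Matrix.toEuclideanCLM (𝕜 := ℝ) X (x - x₀))
      (Matrix.toEuclideanCLM (𝕜 := ℝ) X) x₀ :=
    ((Matrix.toEuclideanCLM (𝕜 := ℝ) X).hasFDerivAt.comp x₀
      ((hasFDerivAt_id x₀).sub_const x₀)).const_add p
  ext i j
  rw [hessAt_apply_of_hasGradientAt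
    (Eventually.of_forall fun x => hasGradientAt_quadratic hX a p x₀ x) hg]
  simp [Matrix.ofLp_toEuclideanCLM, hX.apply]

end QuadForm

section Jets

variable {d : ℕ} {D K : Set (Eucl d)} {g u : Eucl d → ℝ}
  {G : Matrix (Fin d) (Fin d) ℝ → Eucl d → ℝ → Eucl d → ℝ}

/-- `(p, X)` is a second-order superjet of `u` at `y` relative to `K`. Unlike in the usual
definition the inequality carries no `o(‖x - y‖²)` error. -/
def IsSuperjet (K : Set (Eucl d)) (u : Eucl d → ℝ) (y p : Eucl d)
    (X : Matrix (Fin d) (Fin d) ℝ) : Prop :=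
  X.IsSymm ∧ ∀ᶠ x in 𝓝[K] y, u x ≤ u y + ⟪p, x - y⟫ + quadForm X (x - y) / 2

theorem ViscSubsol.le_of_isSuperjet (hu : ViscSubsol D G g u) {y p : Eucl d}
    {X : Matrix (Fin d) (Fin d) ℝ} (hy : y ∈ D) (hK : K ∈ 𝓝 y) (h : IsSuperjet K u y p X) :
    G X p (u y) y ≤ g y := by
  have hmax := h.2
  rw [nhdsWithin_eq_nhds.2 hK] at hmax
  have h' := hu y hy _ (contDiff_quadratic X (u y) p y).contDiffAt (by
    filter_upwards [hmax] with x hx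
    simp only [sub_self, inner_zero_right, quadForm_eq_inner, map_zero] at hx ⊢
    linarith)
  rwa [gradAt_quadratic h.1, hessAt_quadratic h.1] at h'

theorem ViscSupersol.neg (hu : ViscSupersol D G g u) :
    ViscSubsol D (fun M P r x => -G (-M) (-P) (-r) x) (fun x => -g x) (fun x => -u x) := by
  intro x hx φ hφ hmax
  have h := hu x hx (fun y => -φ y) hφ.neg (by
    filter_upwards [hmax] with y hy
    linarith)
  rw [gradAt_neg, hessAt_neg] at h
  simpa using h

theorem ViscSubsol.neg (hu : ViscSubsol D G g u) :
    ViscSupersol D (fun M P r x => -G (-M) (-P) (-r) x) (fun x => -g x) (fun x => -u x) := by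
  intro x hx φ hφ hmin
  have h := hu x hx (fun y => -φ y) hφ.neg (by
    filter_upwards [hmin] with y hy
    linarith)
  rw [gradAt_neg, hessAt_neg] at h
  simpa using h

theorem ViscSubsol.translate (hu : ViscSubsol D G g u) (ξ : Eucl d) :
    ViscSubsol {x | x + ξ ∈ D} (fun M P r x => G M P r (x + ξ)) (fun x => g (x + ξ))
      (fun x => u (x + ξ)) := by
  intro x hx φ hφ hmax
  have hφ' : ContDiffAt ℝ 2 (fun y => φ (y - ξ)) (x + ξ) :=
    ContDiffAt.comp _ (by simpa using hφ) (by fun_prop)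
  have h := hu (x + ξ) hx _ hφ' (by
    have ht : Tendsto (fun y => y - ξ) (𝓝 (x + ξ)) (𝓝 x) := by
      have hc : Continuous fun y : Eucl d => y - ξ := by fun_prop
      simpa using hc.tendsto (x + ξ)
    filter_upwards [ht.eventually hmax] with y hy
    simpa using hy)
  rwa [gradAt_comp_sub, hessAt_comp_sub, add_sub_cancel_right] at h

end Jets

/-! ### Doubling of variables -/

section SupConvolution

variable {V : Type*} [NormedAddCommGroup V] {K : Set V} {w A : V → ℝ} {Y : V → V} {η : ℝ} {x : V}

/-- `A` is the sup-convolution `x ↦ sup_{y ∈ K} (w y - ‖x - y‖² / (2η))` of `w` over `K`, made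
convex by the addition of `‖x‖² / (2η)`; the supremum at `x` is attained at `Y x`. -/
structure IsConvexSupConv (K : Set V) (w : V → ℝ) (η : ℝ) (A : V → ℝ) (Y : V → V) : Prop where
  mem : ∀ x, Y x ∈ K
  eq : ∀ x, A x = w (Y x) - ‖x - Y x‖ ^ 2 / (2 * η) + ‖x‖ ^ 2 / (2 * η)
  le : ∀ x, ∀ y ∈ K, w y - ‖x - y‖ ^ 2 / (2 * η) + ‖x‖ ^ 2 / (2 * η) ≤ A x

theorem exists_isConvexSupConv (hK : IsCompact K) (hne : K.Nonempty) (hw : ContinuousOn w K)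
    (η : ℝ) : ∃ A Y, IsConvexSupConv K w η A Y := by
  have hmax : ∀ x, ∃ y ∈ K, IsMaxOn (fun y => w y - ‖x - y‖ ^ 2 / (2 * η)) K y := fun x =>
    hK.exists_isMaxOn hne (hw.sub (by fun_prop))
  choose Y hmem hY using hmax
  exact ⟨_, Y, hmem, fun x => rfl, fun x y hy => by simpa using hY x hy⟩

variable [InnerProductSpace ℝ V]

theorem IsConvexSupConv.isSubgradientField (hA : IsConvexSupConv K w η A Y) :
    IsSubgradientField A fun x => η⁻¹ • Y x := by
  intro x y
  have h := hA.le y (Y x) (hA.mem x)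
  rw [hA.eq x]
  refine le_trans (le_of_eq ?_) h
  rw [norm_sub_sq_real, norm_sub_sq_real, real_inner_smul_left, inner_sub_right,
    real_inner_comm x, real_inner_comm y]
  ring

/-- The translate of the expansion of `A` at `x` touches `w` from above at `Y x`. -/
theorem IsConvexSupConv.eventually_le (hA : IsConvexSupConv K w η A Y) {S : V →L[ℝ] V}
    (hS : HasSecondOrderExpansion A (η⁻¹ • Y x) S x) {r : ℝ} (hr : 0 < r) :
    ∀ᶠ y in 𝓝[K] Y x, w y ≤ w (Y x) + ⟪η⁻¹ • (Y x - x), y - Y x⟫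
      + (⟪S (y - Y x), y - Y x⟫ + (2 * r - η⁻¹) * ‖y - Y x‖ ^ 2) / 2 := by
  have htrans : Tendsto (fun y => x + (y - Y x)) (𝓝 (Y x)) (𝓝 x) := by
    have hc : Continuous fun y => x + (y - Y x) := by fun_prop
    simpa using hc.tendsto (Y x)
  filter_upwards [nhdsWithin_le_nhds (htrans.eventually (hS.def hr)), self_mem_nhdsWithin]
    with y hexp hy
  have hle := hA.le (x + (y - Y x)) y hy
  rw [add_sub_cancel_left, norm_pow, Real.norm_eq_abs, Real.norm_eq_abs, abs_norm] at hexp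
  have hexp := (abs_le.1 hexp).2
  rw [hA.eq x] at hexp
  obtain ⟨v, rfl⟩ : ∃ v, y = Y x + v := ⟨y - Y x, by abel⟩
  rw [add_sub_cancel_left] at hle hexp ⊢
  rw [add_sub_add_right_eq_sub, norm_add_sq_real] at hle
  rw [real_inner_smul_left] at hexp ⊢
  rw [inner_sub_left]
  linear_combination hle + hexp

/-- Completing the square: among all `x`, the penalisation of `y` and `z` is least at the midpoint
shifted by `-(η / 2) q`. -/
theorem doubled_penalization_eq (hη : 0 < η) (q x y z : V) :
    (‖x - y‖ ^ 2 + ‖x - z‖ ^ 2) / (2 * η) + ⟪q, x⟫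
      = ‖y - z‖ ^ 2 / (4 * η) + ⟪q, y + z⟫ / 2 - η / 4 * ‖q‖ ^ 2
        + η⁻¹ * ‖x - ((2⁻¹ : ℝ) • (y + z) - (η / 2) • q)‖ ^ 2 := by
  simp only [← real_inner_self_eq_norm_sq, inner_sub_left, inner_sub_right, inner_add_left,
    inner_add_right, real_inner_smul_left, real_inner_smul_right, real_inner_comm x y,
    real_inner_comm x z, real_inner_comm x q, real_inner_comm y z, real_inner_comm y q,
    real_inner_comm z q]
  field_simp
  ring

variable {B : V → ℝ} {Z : V → V} {w' : V → ℝ}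

theorem IsConvexSupConv.add_sub_eq (hA : IsConvexSupConv K w η A Y)
    (hB : IsConvexSupConv K w' η B Z) (q x : V) :
    (A + B) x - 2 / η / 2 * ‖x‖ ^ 2 - ⟪q, x⟫ = w (Y x) + w' (Z x)
      - ((‖x - Y x‖ ^ 2 + ‖x - Z x‖ ^ 2) / (2 * η) + ⟪q, x⟫) := by
  rw [Pi.add_apply, hA.eq, hB.eq]
  ring

theorem IsConvexSupConv.le_add_sub (hA : IsConvexSupConv K w η A Y)
    (hB : IsConvexSupConv K w' η B Z) (q x : V) {y z : V} (hy : y ∈ K) (hz : z ∈ K) :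
    w y + w' z - ((‖x - y‖ ^ 2 + ‖x - z‖ ^ 2) / (2 * η) + ⟪q, x⟫)
      ≤ (A + B) x - 2 / η / 2 * ‖x‖ ^ 2 - ⟪q, x⟫ := by
  rw [Pi.add_apply]
  linear_combination hA.le x y hy + hB.le x z hz

theorem IsConvexSupConv.exists_touchedByParaboloid_add (hA : IsConvexSupConv K w η A Y)
    (hB : IsConvexSupConv K w' η B Z) (hK : IsCompact K) (hw : ContinuousOn w K)
    (hw' : ContinuousOn w' K) (hη : 0 < η) (q : V) :
    ∃ x, TouchedByParaboloid (A + B) (2 / η) ((2 / η) • x + q) x := by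
  have hcont : ContinuousOn (fun p : V × V => w p.1 + w' p.2
      - (‖p.1 - p.2‖ ^ 2 / (4 * η) + ⟪q, p.1 + p.2⟫ / 2)) (K ×ˢ K) :=
    ((hw.comp continuousOn_fst fun p hp => hp.1).add
      (hw'.comp continuousOn_snd fun p hp => hp.2)).sub (by fun_prop)
  obtain ⟨⟨y, z⟩, ⟨hy, hz⟩, hmax⟩ :=
    (hK.prod hK).exists_isMaxOn ⟨(Y 0, Z 0), hA.mem 0, hB.mem 0⟩ hcont
  refine ⟨(2⁻¹ : ℝ) • (y + z) - (η / 2) • q, touchedByParaboloid_smul_add_iff.2 fun x => ?_⟩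
  refine le_trans ?_ (hA.le_add_sub hB q _ hy hz)
  rw [hA.add_sub_eq hB, doubled_penalization_eq hη, doubled_penalization_eq hη, sub_self, norm_zero]
  have hYZ : w (Y x) + w' (Z x) - (‖Y x - Z x‖ ^ 2 / (4 * η) + ⟪q, Y x + Z x⟫ / 2)
      ≤ w y + w' z - (‖y - z‖ ^ 2 / (4 * η) + ⟪q, y + z⟫ / 2) :=
    hmax (show (Y x, Z x) ∈ K ×ˢ K from ⟨hA.mem x, hB.mem x⟩)
  have hsq : 0 ≤ η⁻¹ * ‖x - ((2⁻¹ : ℝ) • (Y x + Z x) - (η / 2) • q)‖ ^ 2 := by positivity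
  linear_combination hYZ + hsq

theorem IsConvexSupConv.smul_add_smul_eq_of_touched (hA : IsConvexSupConv K w η A Y)
    (hB : IsConvexSupConv K w' η B Z) (hη : 0 < η) {q : V}
    (hx : TouchedByParaboloid (A + B) (2 / η) ((2 / η) • x + q) x) :
    η⁻¹ • Y x + η⁻¹ • Z x = (2 / η) • x + q :=
  (hA.isSubgradientField.add hB.isSubgradientField).eq_of_touched (by positivity) hx

theorem IsConvexSupConv.add_le_of_touched (hA : IsConvexSupConv K w η A Y)
    (hB : IsConvexSupConv K w' η B Z) {R : ℝ} (hR : ∀ y ∈ K, ‖y‖ ≤ R) (hη : 0 < η) {q x x₀ : V}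
    (hx : TouchedByParaboloid (A + B) (2 / η) ((2 / η) • x + q) x) (hx₀ : x₀ ∈ K) :
    w x₀ + w' x₀ + ‖Y x - Z x‖ ^ 2 / (4 * η)
      ≤ w (Y x) + w' (Z x) + ‖q‖ * (2 * R + η * ‖q‖) := by
  have hmid : (2⁻¹ : ℝ) • (Y x + Z x) - (η / 2) • q = x := by
    rw [← sub_eq_iff_eq_add'.2 (hA.smul_add_smul_eq_of_touched hB hη hx)]
    match_scalars <;> field_simp <;> ring
  have hmax := (hA.le_add_sub hB q x₀ hx₀ hx₀).trans
    ((touchedByParaboloid_smul_add_iff.1 hx x₀).trans_eq (hA.add_sub_eq hB q x))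
  rw [doubled_penalization_eq hη q x, hmid] at hmax
  simp only [sub_self, norm_zero] at hmax
  have hinner₀ : ⟪q, x₀⟫ ≤ ‖q‖ * R := (real_inner_le_norm q x₀).trans (by gcongr; exact hR _ hx₀)
  have hinner : -⟪q, Y x + Z x⟫ ≤ ‖q‖ * (R + R) := by
    rw [← inner_neg_left, ← norm_neg q]
    refine (real_inner_le_norm _ _).trans ?_
    gcongr
    exact norm_add_le_of_le (hR _ (hA.mem x)) (hR _ (hB.mem x))
  have hsq : 0 ≤ η * ‖q‖ ^ 2 := by positivity
  linear_combination hmax + hinner₀ + hinner / 2 + 3 / 4 * hsq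

end SupConvolution

section Doubling

variable {d : ℕ} {K : Set (Eucl d)} {w w' : Eucl d → ℝ}

theorem IsConvexSupConv.exists_isSuperjet {η : ℝ} {A : Eucl d → ℝ} {Y : Eucl d → Eucl d}
    (hA : IsConvexSupConv K w η A Y) {x : Eucl d} {S : Eucl d →L[ℝ] Eucl d}
    (hS : HasSecondOrderExpansion A (η⁻¹ • Y x) S x) {r : ℝ} (hr : 0 < r) :
    ∃ X, IsSuperjet K w (Y x) (η⁻¹ • (Y x - x)) X ∧
      ∀ v, quadForm X v = ⟪S v, v⟫ + (2 * r - η⁻¹) * ‖v‖ ^ 2 := by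
  obtain ⟨X, hsymm, hX⟩ :=
    exists_isSymm_quadForm_eq (S + (2 * r - η⁻¹) • ContinuousLinearMap.id ℝ (Eucl d))
  have hX' : ∀ v, quadForm X v = ⟪S v, v⟫ + (2 * r - η⁻¹) * ‖v‖ ^ 2 := fun v => by
    simp [hX, inner_add_left, real_inner_smul_left]
  refine ⟨X, ⟨hsymm, ?_⟩, hX'⟩
  filter_upwards [hA.eventually_le hS hr] with y hy
  rwa [hX']

theorem exists_isSuperjet_pair (hK : IsCompact K) (hne : K.Nonempty) (hw : ContinuousOn w K)
    (hw' : ContinuousOn w' K) {η ε : ℝ} (hη : 0 < η) (hε : 0 < ε) :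
    ∃ y ∈ K, ∃ z ∈ K, ∃ p q X Z, IsSuperjet K w y p X ∧ IsSuperjet K w' z q Z ∧
      ‖p + q‖ ≤ ε ∧ (∀ v, quadForm X v + quadForm Z v ≤ ε * ‖v‖ ^ 2) ∧
      ∀ x ∈ K, w x + w' x + ‖y - z‖ ^ 2 / (4 * η) ≤ w y + w' z + ε := by
  obtain ⟨A, Y, hA⟩ := exists_isConvexSupConv hK hne hw η
  obtain ⟨B, Z, hB⟩ := exists_isConvexSupConv hK hne hw' η
  obtain ⟨R, hR₀, hR⟩ := hK.isBounded.exists_pos_norm_le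
  obtain ⟨r, hr, hrε, hrR⟩ : ∃ r > 0, r ≤ ε ∧ r * (2 * R + η * r) ≤ ε := by
    have hcont : Continuous fun r : ℝ => r * (2 * R + η * r) := by fun_prop
    have hlim : ∀ᶠ r in 𝓝[>] (0 : ℝ), r * (2 * R + η * r) < ε :=
      (hcont.tendsto 0).mono_left nhdsWithin_le_nhds |>.eventually_lt_const (by simpa using hε)
    obtain ⟨r, hrε, hr⟩ := (hlim.and (Ioc_mem_nhdsGT hε)).exists
    exact ⟨r, hr.1, hr.2, hrε.le⟩
  obtain ⟨q, x, S, T, hq, hx, hS, hT⟩ :=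
    hA.isSubgradientField.exists_hasSecondOrderExpansion_of_touched_add hB.isSubgradientField
      (by positivity) (hA.exists_touchedByParaboloid_add hB hK hw hw' hη) hr
  obtain ⟨X, hXjet, hX⟩ := hA.exists_isSuperjet hS (r := ε / 4) (by positivity)
  obtain ⟨X', hX'jet, hX'⟩ := hB.exists_isSuperjet hT (r := ε / 4) (by positivity)
  refine ⟨Y x, hA.mem x, Z x, hB.mem x, _, _, X, X', hXjet, hX'jet, ?_, fun v => ?_,
    fun x₀ hx₀ => (hA.add_le_of_touched hB hR hη hx hx₀).trans ?_⟩
  · have hpq : η⁻¹ • (Y x - x) + η⁻¹ • (Z x - x) = q := by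
      rw [← sub_eq_iff_eq_add'.2 (hA.smul_add_smul_eq_of_touched hB hη hx)]
      module
    rw [hpq]
    exact hq.le.trans hrε
  · rw [← hA.smul_add_smul_eq_of_touched hB hη hx] at hx
    have hord := (hS.add hT).inner_le_of_touched hx v
    rw [add_apply, inner_add_left] at hord
    rw [hX, hX']
    linear_combination hord
  · have : ‖q‖ * (2 * R + η * ‖q‖) ≤ r * (2 * R + η * r) := by gcongr
    linarith

theorem exists_maximizer_forall_exists_isSuperjet_pair (hK : IsCompact K) (hne : K.Nonempty)
    (hw : ContinuousOn w K) (hw' : ContinuousOn w' K) :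
    ∃ x₀ ∈ K, (∀ x ∈ K, w x + w' x ≤ w x₀ + w' x₀) ∧ ∀ ε > 0, ∃ y ∈ K, ∃ z ∈ K, ∃ p q X Z,
      dist y x₀ < ε ∧ dist z x₀ < ε ∧ IsSuperjet K w y p X ∧ IsSuperjet K w' z q Z ∧
      ‖p + q‖ ≤ ε ∧ ∀ v, quadForm X v + quadForm Z v ≤ ε * ‖v‖ ^ 2 := by
  have hδ_pos : ∀ k : ℕ, 0 < 1 / ((k : ℝ) + 1) := fun k => Nat.one_div_pos_of_nat
  have hδ := tendsto_one_div_add_atTop_nhds_zero_nat (𝕜 := ℝ)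
  choose y hy z hz p q X Z hX hZ hpq hXZ hmax using fun k : ℕ =>
    exists_isSuperjet_pair hK hne hw hw' (hδ_pos k) (hδ_pos k)
  obtain ⟨x₀, hx₀, ψ, hψ, hy_lim⟩ := hK.tendsto_subseq hy
  obtain ⟨x₁, hx₁⟩ := hne
  obtain ⟨C, hC⟩ := hK.exists_bound_of_continuousOn hw
  obtain ⟨C', hC'⟩ := hK.exists_bound_of_continuousOn hw'
  have hδψ := hδ.comp hψ.tendsto_atTop
  have hdist : Tendsto (fun k => ‖y (ψ k) - z (ψ k)‖) atTop (𝓝 0) := by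
    have hsq : ∀ k, ‖y k - z k‖ ^ 2
        ≤ 4 * (1 / ((k : ℝ) + 1)) * (C + C' + 1 / ((k : ℝ) + 1) - (w x₁ + w' x₁)) := fun k => by
      rw [← div_le_iff₀' (mul_pos four_pos (hδ_pos k))]
      linarith [hmax k x₁ hx₁, (abs_le.1 (hC _ (hy k))).2, (abs_le.1 (hC' _ (hz k))).2]
    have hlim := squeeze_zero (fun k => sq_nonneg ‖y k - z k‖) hsq (by
      simpa using (hδ.const_mul 4).mul ((hδ.const_add (C + C')).sub_const (w x₁ + w' x₁)))
    simpa using (hlim.comp hψ.tendsto_atTop).sqrt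
  have hz_lim : Tendsto (z ∘ ψ) atTop (𝓝 x₀) := by
    simpa [Function.comp_def] using hy_lim.sub (tendsto_zero_iff_norm_tendsto_zero.2 hdist)
  have htendsto {φ : Eucl d → ℝ} (hφ : ContinuousOn φ K) {a : ℕ → Eucl d} (ha : ∀ k, a k ∈ K)
      (ha_lim : Tendsto (a ∘ ψ) atTop (𝓝 x₀)) : Tendsto (fun k => φ (a (ψ k))) atTop (𝓝 (φ x₀)) :=
    (hφ x₀ hx₀).tendsto.comp
      (tendsto_nhdsWithin_iff.2 ⟨ha_lim, Eventually.of_forall fun k => ha (ψ k)⟩)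
  refine ⟨x₀, hx₀, fun x hx => ?_, fun ε hε => ?_⟩
  · rw [← add_zero (w x₀ + w' x₀)]
    refine ge_of_tendsto' (((htendsto hw hy hy_lim).add (htendsto hw' hz hz_lim)).add hδψ)
      fun k => le_trans (le_add_of_nonneg_right ?_) (hmax (ψ k) x hx)
    positivity
  · obtain ⟨k, hyk, hzk, hδk⟩ := ((hy_lim.eventually (ball_mem_nhds x₀ hε)).and
      ((hz_lim.eventually (ball_mem_nhds x₀ hε)).and (hδψ.eventually_lt_const hε))).exists
    exact ⟨_, hy (ψ k), _, hz (ψ k), _, _, _, _, hyk, hzk, hX (ψ k), hZ (ψ k),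
      (hpq (ψ k)).trans hδk.le, fun v => (hXZ (ψ k) v).trans (by gcongr; exact hδk.le)⟩

end Doubling

section Comparison

variable {d : ℕ} {D : Set (Eucl d)} {G₁ G₂ : Matrix (Fin d) (Fin d) ℝ → Eucl d → ℝ → Eucl d → ℝ}
  {f g u v : Eucl d → ℝ} {h e c m m' : ℝ} {σ : ℝ → ℝ}

/-- `G₂` exceeds `G₁` by at most `e + σ |x - y| + c δ` on jets at `x` and `y` that are ordered up
to `δ`, as are those obtained by doubling the variables. -/
def DoublingCondition (D : Set (Eucl d))
    (G₁ G₂ : Matrix (Fin d) (Fin d) ℝ → Eucl d → ℝ → Eucl d → ℝ) (e c : ℝ) (σ : ℝ → ℝ) : Prop :=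
  ∀ X Y : Matrix (Fin d) (Fin d) ℝ, X.IsSymm → Y.IsSymm → ∀ (p q : Eucl d) (r s δ : ℝ), 0 ≤ δ →
    (∀ w, quadForm X w ≤ quadForm Y w + δ * ‖w‖ ^ 2) → ‖p - q‖ ≤ δ → s ≤ r →
    ∀ x ∈ D, ∀ y ∈ D, G₂ Y q s y ≤ G₁ X p r x + e + σ ‖x - y‖ + c * δ

theorem DoublingCondition.sub_le_of_isSuperjet (hG : DoublingCondition D G₁ G₂ e c σ) (hh : 0 < h)
    (hu : ViscSubsol D (fun M P r x => G₁ M P r x + r / h) (fun x => f x / h) u)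
    (hv : ViscSupersol D (fun M P r x => G₂ M P r x + r / h) (fun x => g x / h) v)
    {y z p q : Eucl d} {X Z : Matrix (Fin d) (Fin d) ℝ} {ε : ℝ} {K : Set (Eucl d)}
    (hyD : y ∈ D) (hzD : z ∈ D) (hyK : K ∈ 𝓝 y) (hzK : K ∈ 𝓝 z) (hX : IsSuperjet K u y p X)
    (hZ : IsSuperjet K (fun x => -v x) z q Z) (hε : 0 ≤ ε) (hpq : ‖p + q‖ ≤ ε)
    (hXZ : ∀ w, quadForm X w + quadForm Z w ≤ ε * ‖w‖ ^ 2) :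
    u y - v z ≤ max 0 (f y - g z + h * (e + σ ‖y - z‖ + c * ε)) := by
  rcases le_total (u y) (v z) with hle | hle
  · exact le_max_of_le_left (sub_nonpos.2 hle)
  have heq₁ := hu.le_of_isSuperjet hyD hyK hX
  have heq₂ := hv.neg.le_of_isSuperjet hzD hzK hZ
  have hG' := hG X (-Z) hX.1 hZ.1.neg p (-q) (u y) (v z) ε hε
    (fun w => by rw [quadForm_neg]; linarith [hXZ w]) (by rwa [sub_neg_eq_add]) hle y hyD z hzD
  rw [neg_neg] at heq₂
  have hscaled : (u y - v z) / h ≤ (f y - g z) / h + (e + σ ‖y - z‖ + c * ε) := by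
    linear_combination heq₁ + heq₂ + hG'
  refine le_max_of_le_right ?_
  calc u y - v z = h * ((u y - v z) / h) := by field_simp
    _ ≤ h * ((f y - g z) / h + (e + σ ‖y - z‖ + c * ε)) := by gcongr
    _ = f y - g z + h * (e + σ ‖y - z‖ + c * ε) := by field_simp

theorem DoublingCondition.sub_le_of_forall_exists_isSuperjet (hG : DoublingCondition D G₁ G₂ e c σ)
    (hD : IsOpen D) (hσ : Tendsto σ (𝓝 0) (𝓝 0)) (hh : 0 < h) (huc : ContinuousOn u (closure D))
    (hvc : ContinuousOn v (closure D)) (hgc : ContinuousOn g (closure D))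
    (hu : ViscSubsol D (fun M P r x => G₁ M P r x + r / h) (fun x => f x / h) u)
    (hv : ViscSupersol D (fun M P r x => G₂ M P r x + r / h) (fun x => g x / h) v)
    (hfg : ∀ x ∈ D, f x - g x ≤ m') {x₀ : Eucl d} (hx₀ : x₀ ∈ D)
    (hjets : ∀ ε > 0, ∃ y ∈ closure D, ∃ z ∈ closure D, ∃ p q X Z, dist y x₀ < ε ∧
      dist z x₀ < ε ∧ IsSuperjet (closure D) u y p X ∧
      IsSuperjet (closure D) (fun x => -v x) z q Z ∧ ‖p + q‖ ≤ ε ∧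
      ∀ w, quadForm X w + quadForm Z w ≤ ε * ‖w‖ ^ 2) :
    u x₀ - v x₀ ≤ max 0 (m' + h * e) := by
  obtain ⟨ρ, hρ, hball⟩ := Metric.isOpen_iff.1 hD x₀ hx₀
  set ε : ℕ → ℝ := fun k => min ρ (1 / ((k : ℝ) + 1)) with hε_def
  have hε : ∀ k, 0 < ε k := fun k => lt_min hρ Nat.one_div_pos_of_nat
  have hε_lim : Tendsto ε atTop (𝓝 0) := by
    simpa [hε_def, hρ.le] using
      (tendsto_const_nhds (x := ρ)).min tendsto_one_div_add_atTop_nhds_zero_nat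
  choose y _ z _ p q X Z hy hz hX hZ hpq hXZ using fun k => hjets (ε k) (hε k)
  have hbound : ∀ k, u (y k) - v (z k)
      ≤ max 0 (m' + (g (y k) - g (z k)) + h * (e + σ ‖y k - z k‖ + c * ε k)) := fun k => by
    have hyD : y k ∈ D := hball ((hy k).trans_le (min_le_left _ _))
    have hzD : z k ∈ D := hball ((hz k).trans_le (min_le_left _ _))
    have hnhds {x : Eucl d} (hx : x ∈ D) : closure D ∈ 𝓝 x :=
      mem_of_superset (hD.mem_nhds hx) subset_closure
    refine (hG.sub_le_of_isSuperjet hh hu hv hyD hzD (hnhds hyD) (hnhds hzD) (hX k) (hZ k)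
      (hε k).le (hpq k) (hXZ k)).trans (max_le_max le_rfl ?_)
    linarith [hfg _ hyD]
  have hy_lim : Tendsto y atTop (𝓝 x₀) := tendsto_iff_dist_tendsto_zero.2
    (squeeze_zero (fun _ => dist_nonneg) (fun k => (hy k).le) hε_lim)
  have hz_lim : Tendsto z atTop (𝓝 x₀) := tendsto_iff_dist_tendsto_zero.2
    (squeeze_zero (fun _ => dist_nonneg) (fun k => (hz k).le) hε_lim)
  have hσ_lim : Tendsto (fun k => σ ‖y k - z k‖) atTop (𝓝 0) :=
    hσ.comp (by simpa using (hy_lim.sub hz_lim).norm)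
  have hcont {φ : Eucl d → ℝ} (hφ : ContinuousOn φ (closure D)) : Tendsto φ (𝓝 x₀) (𝓝 (φ x₀)) :=
    hφ.continuousAt (mem_of_superset (hD.mem_nhds hx₀) subset_closure)
  have hg_lim : Tendsto (fun k => g (y k) - g (z k)) atTop (𝓝 0) := by
    simpa using ((hcont hgc).comp hy_lim).sub ((hcont hgc).comp hz_lim)
  refine le_of_tendsto_of_tendsto' (((hcont huc).comp hy_lim).sub ((hcont hvc).comp hz_lim))
    (tendsto_const_nhds.max ?_) hbound
  simpa using (hg_lim.const_add m').add
    (((hσ_lim.const_add e).add (hε_lim.const_mul c)).const_mul h)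

theorem DoublingCondition.comparison (hG : DoublingCondition D G₁ G₂ e c σ) (hD : IsOpen D)
    (hDb : Bornology.IsBounded D) (hσ : Tendsto σ (𝓝 0) (𝓝 0)) (hh : 0 < h)
    (huc : ContinuousOn u (closure D)) (hvc : ContinuousOn v (closure D))
    (hgc : ContinuousOn g (closure D))
    (hu : ViscSubsol D (fun M P r x => G₁ M P r x + r / h) (fun x => f x / h) u)
    (hv : ViscSupersol D (fun M P r x => G₂ M P r x + r / h) (fun x => g x / h) v)
    (hm : 0 ≤ m) (hbd : ∀ x ∈ frontier D, u x - v x ≤ m) (hfg : ∀ x ∈ D, f x - g x ≤ m') :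
    ∀ x ∈ closure D, u x - v x ≤ max m (m' + h * e) := by
  intro x hx
  obtain ⟨x₀, hx₀, hmax, hjets⟩ := exists_maximizer_forall_exists_isSuperjet_pair
    hDb.isCompact_closure ⟨x, hx⟩ huc hvc.neg
  have hle : u x - v x ≤ u x₀ - v x₀ := by simpa [sub_eq_add_neg] using hmax x hx
  refine hle.trans ?_
  by_cases hx₀D : x₀ ∈ D
  · exact (hG.sub_le_of_forall_exists_isSuperjet hD hσ hh huc hvc hgc hu hv hfg hx₀D hjets).trans
      (max_le_max hm le_rfl)
  · exact le_max_of_le_left (hbd x₀ (hD.frontier_eq ▸ ⟨hx₀, hx₀D⟩))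

end Comparison

/-! ### Operators -/

section SpectralNorm

variable {d : ℕ} {M N X Y : Matrix (Fin d) (Fin d) ℝ}

theorem specNorm_nonneg (M : Matrix (Fin d) (Fin d) ℝ) : 0 ≤ specNorm M :=
  Real.iSup_nonneg fun _ => abs_nonneg _

theorem abs_le_specNorm_of_hasEigenvalue (hM : M.IsHermitian) {μ : ℝ}
    (hμ : Module.End.HasEigenvalue (Matrix.toLin' M) μ) : |μ| ≤ specNorm M := by
  have hspec := hμ.mem_spectrum
  rw [Matrix.spectrum_toLin', hM.spectrum_real_eq_range_eigenvalues] at hspec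
  obtain ⟨i, rfl⟩ := hspec
  have hle : |eigs M i| ≤ specNorm M :=
    le_ciSup (f := fun i => |eigs M i|) (Set.finite_range _).bddAbove i
  rwa [show eigs M = hM.eigenvalues from dif_pos hM] at hle

theorem isSymm_smul_one (δ : ℝ) : (δ • (1 : Matrix (Fin d) (Fin d) ℝ)).IsSymm :=
  Matrix.isSymm_one.smul δ

theorem isSymm_of_posSemidef (hN : N.PosSemidef) : N.IsSymm :=
  (Matrix.conjTranspose_eq_transpose_of_trivial N).symm.trans hN.isHermitian

theorem specNorm_smul_one_le {δ : ℝ} (hδ : 0 ≤ δ) :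
    specNorm (δ • (1 : Matrix (Fin d) (Fin d) ℝ)) ≤ δ := by
  have hH : (δ • (1 : Matrix (Fin d) (Fin d) ℝ)).IsHermitian :=
    (Matrix.conjTranspose_eq_transpose_of_trivial _).trans (isSymm_smul_one δ)
  refine Real.iSup_le (fun i => ?_) hδ
  have : Nonempty (Fin d) := ⟨i⟩
  have hi : hH.eigenvalues i ∈ spectrum ℝ (algebraMap ℝ (Matrix (Fin d) (Fin d) ℝ) δ) := by
    simpa only [Algebra.algebraMap_eq_smul_one] using hH.eigenvalues_mem_spectrum_real i
  rw [spectrum.scalar_eq, mem_singleton_iff] at hi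
  rw [eigs, dif_pos hH, hi, abs_of_nonneg hδ]

theorem mul_norm_sq_le_specNorm_smul_vecMulVec (c : ℝ) {w : Eucl d} (hw : w ≠ 0) :
    c * ‖w‖ ^ 2 ≤ specNorm (c • Matrix.vecMulVec (WithLp.ofLp w) (WithLp.ofLp w)) := by
  have hH : (c • Matrix.vecMulVec (WithLp.ofLp w) (WithLp.ofLp w)).IsHermitian := by
    ext i j
    simp [Matrix.vecMulVec_apply, mul_comm]
  have hnorm : ‖w‖ ^ 2 = WithLp.ofLp w ⬝ᵥ WithLp.ofLp w := by
    rw [EuclideanSpace.real_norm_sq_eq]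
    simp [dotProduct, sq]
  refine (le_abs_self _).trans (abs_le_specNorm_of_hasEigenvalue hH
    (Module.End.hasEigenvalue_of_hasEigenvector (x := WithLp.ofLp w)
      ⟨Module.End.mem_eigenspace_iff.2 ?_, fun h => hw (WithLp.ofLp_injective 2 h)⟩))
  rw [Matrix.toLin'_apply, Matrix.smul_mulVec, Matrix.vecMulVec_mulVec, ← hnorm, op_smul_eq_smul,
    smul_smul]

theorem pucciPlus_zero (lam Lam : ℝ) : pucciPlus lam Lam (0 : Matrix (Fin d) (Fin d) ℝ) = 0 := by
  have heigs : eigs (0 : Matrix (Fin d) (Fin d) ℝ) = 0 := by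
    rw [eigs, dif_pos Matrix.isHermitian_zero]
    exact Matrix.isHermitian_zero.eigenvalues_eq_zero_iff.2 rfl
  simp [pucciPlus, posPartTrace, negPartTrace, heigs]

theorem posSemidef_of_quadForm_nonneg (hN : N.IsSymm) (h : ∀ w, 0 ≤ quadForm N w) :
    N.PosSemidef := by
  refine Matrix.PosSemidef.of_dotProduct_mulVec_nonneg ?_ fun v => ?_
  · rwa [Matrix.IsHermitian, Matrix.conjTranspose_eq_transpose_of_trivial]
  · simpa [quadForm_eq_inner, EuclideanSpace.inner_eq_star_dotProduct] using h (WithLp.toLp 2 v)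

theorem posSemidef_add_smul_one_sub (hX : X.IsSymm) (hY : Y.IsSymm) {δ : ℝ}
    (hXY : ∀ w, quadForm X w ≤ quadForm Y w + δ * ‖w‖ ^ 2) : (Y + δ • 1 - X).PosSemidef := by
  refine posSemidef_of_quadForm_nonneg ((hY.add (isSymm_smul_one δ)).sub hX) fun w => ?_
  have hw := hXY w
  simp only [quadForm_eq_inner, map_sub, map_add, map_smul, map_one, sub_apply, add_apply,
    smul_apply, one_apply_eq_self, inner_sub_left, inner_add_left, real_inner_smul_left,
    real_inner_self_eq_norm_sq] at hw ⊢
  linarith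

end SpectralNorm

section Operators

variable {d : ℕ} {lam Lam gam c C₀ K : ℝ} {X₀ : Set (Eucl d)} {Tset : Set ℝ}
  {F : Matrix (Fin d) (Fin d) ℝ → Eucl d → ℝ → Eucl d → ℝ → ℝ} {ω : ℝ → ℝ → ℝ} {σ : ℝ → ℝ}

/-- `F` is degenerate elliptic, Lipschitz in the gradient and monotone in the unknown, in the form
needed at jets that are ordered only up to an error `δ`. -/
def ProperElliptic (c : ℝ) (X₀ : Set (Eucl d)) (Tset : Set ℝ)
    (F : Matrix (Fin d) (Fin d) ℝ → Eucl d → ℝ → Eucl d → ℝ → ℝ) : Prop :=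
  ∀ X Y : Matrix (Fin d) (Fin d) ℝ, X.IsSymm → Y.IsSymm → ∀ (p q : Eucl d) (r s δ : ℝ), 0 ≤ δ →
    (∀ w, quadForm X w ≤ quadForm Y w + δ * ‖w‖ ^ 2) → ‖p - q‖ ≤ δ → s ≤ r →
    ∀ x ∈ X₀, ∀ t ∈ Tset, F Y q s x t ≤ F X p r x t + c * δ

/-- `F` has spatial modulus `σ` and is Lipschitz in time with constant `C₀` over unit time spans,
uniformly in the jet variables. -/
def HasSpaceTimeModulus (σ : ℝ → ℝ) (C₀ : ℝ) (X₀ : Set (Eucl d)) (Tset : Set ℝ)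
    (F : Matrix (Fin d) (Fin d) ℝ → Eucl d → ℝ → Eucl d → ℝ → ℝ) : Prop :=
  ∀ M P r, ∀ x ∈ X₀, ∀ y ∈ X₀, ∀ t ∈ Tset, ∀ s ∈ Tset, |t - s| ≤ 1 →
    |F M P r x t - F M P r y s| ≤ σ ‖x - y‖ + C₀ * |t - s|

/-- The operator governing `-u` when `F` governs `u`. -/
def reflect (F : Matrix (Fin d) (Fin d) ℝ → Eucl d → ℝ → Eucl d → ℝ → ℝ) :
    Matrix (Fin d) (Fin d) ℝ → Eucl d → ℝ → Eucl d → ℝ → ℝ :=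
  fun M P r x t => -F (-M) (-P) (-r) x t

theorem UniformlyElliptic.reflect (hF : UniformlyElliptic lam Lam X₀ Tset F) :
    UniformlyElliptic lam Lam X₀ Tset (reflect F) := by
  intro M N hM hN P v x hx t ht
  have hsymm : (-(M + N)).IsSymm := (hM.add (isSymm_of_posSemidef hN)).neg
  have h := hF (-(M + N)) N hsymm hN (-P) (-v) x hx t ht
  rw [neg_add_rev, neg_add_cancel_comm] at h
  simp only [_root_.reflect, neg_add_rev]
  constructor <;> linarith

theorem StructureCondition.reflect (hF : StructureCondition lam Lam gam ω X₀ Tset F) :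
    StructureCondition lam Lam gam ω X₀ Tset (reflect F) := by
  refine ⟨hF.1, fun R hR M N hM hN P Q r s hr hs x hx t ht => ?_⟩
  have h := hF.2 R hR (-N) (-M) hN.neg hM.neg (-Q) (-P) (-s) (-r) (by rwa [abs_neg])
    (by rwa [abs_neg]) x hx t ht
  rw [neg_sub_neg, neg_sub_neg, neg_sub_neg, neg_sub_neg] at h
  simp only [_root_.reflect]
  constructor <;> linarith

theorem HasSpaceTimeModulus.reflect (hF : HasSpaceTimeModulus σ C₀ X₀ Tset F) :
    HasSpaceTimeModulus σ C₀ X₀ Tset (reflect F) := by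
  intro M P r x hx y hy t ht s hs hts
  have h := hF (-M) (-P) (-r) x hx y hy t ht s hs hts
  rwa [_root_.reflect, _root_.reflect, neg_sub_neg, abs_sub_comm]

theorem HasSpaceTimeModulus.nonneg (hF : HasSpaceTimeModulus σ C₀ X₀ Tset F)
    (hT : Tset.Nonempty) {x y : Eucl d} (hx : x ∈ X₀) (hy : y ∈ X₀) : 0 ≤ σ ‖x - y‖ := by
  obtain ⟨t, ht⟩ := hT
  simpa using (abs_nonneg _).trans (hF 0 0 0 x hx y hy t ht t ht (by simp))

theorem StructureCondition.apply_le_add (hF : StructureCondition lam Lam gam ω X₀ Tset F)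
    {M : Matrix (Fin d) (Fin d) ℝ} (hM : M.IsSymm) (p q : Eucl d) {r s : ℝ} (hrs : s ≤ r)
    {x : Eucl d} (hx : x ∈ X₀) {t : ℝ} (ht : t ∈ Tset) :
    F M q s x t ≤ F M p r x t + gam * ‖p - q‖ := by
  have hR : 0 < max |r| |s| + 1 := by positivity
  have h := (hF.2 _ hR M M hM hM q p s r (by linarith [le_max_right |r| |s|])
    (by linarith [le_max_left |r| |s|]) x hx t ht).2
  rw [sub_self, pucciPlus_zero, max_eq_right (sub_nonpos.2 hrs), (hF.1 _ hR).2.2,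
    norm_sub_rev] at h
  linarith

theorem UniformlyElliptic.properElliptic (hF : UniformlyElliptic lam Lam X₀ Tset F)
    (hS : StructureCondition lam Lam gam ω X₀ Tset F) (hlam : 0 ≤ lam) (hLam : 0 ≤ Lam)
    (hgam : 0 ≤ gam) : ProperElliptic (gam + Lam) X₀ Tset F := by
  intro X Y hX hY p q r s δ hδ hXY hpq hrs x hx t ht
  set N := Y + δ • 1 - X with hN
  calc F Y q s x t
      ≤ F (Y + δ • 1) q s x t + Lam * specNorm (δ • (1 : Matrix (Fin d) (Fin d) ℝ)) := by
        linarith [(hF Y (δ • 1) hY (Matrix.PosSemidef.one.smul hδ) q s x hx t ht).1]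
    _ ≤ F (Y + δ • 1) q s x t + Lam * δ := by
        gcongr
        exact specNorm_smul_one_le hδ
    _ = F (X + N) q s x t + Lam * δ := by rw [hN, add_sub_cancel]
    _ ≤ F X q s x t - lam * specNorm N + Lam * δ := by
        linarith [(hF X N hX (posSemidef_add_smul_one_sub hX hY hXY) q s x hx t ht).2]
    _ ≤ F X q s x t + Lam * δ := by
        linarith [mul_nonneg hlam (specNorm_nonneg N)]
    _ ≤ F X p r x t + gam * ‖p - q‖ + Lam * δ := by
        gcongr
        exact hS.apply_le_add hX p q hrs hx ht
    _ ≤ F X p r x t + (gam + Lam) * δ := by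
        linarith [mul_le_mul_of_nonneg_left hpq hgam]

theorem ProperElliptic.reflect (hF : ProperElliptic c X₀ Tset F) :
    ProperElliptic c X₀ Tset (reflect F) := by
  intro X Y hX hY p q r s δ hδ hXY hpq hrs x hx t ht
  have h := hF (-Y) (-X) hY.neg hX.neg (-q) (-p) (-s) (-r) δ hδ
    (fun w => by
      rw [quadForm_neg, quadForm_neg]
      linarith [hXY w])
    (by rwa [neg_sub_neg]) (neg_le_neg hrs) x hx t ht
  rw [_root_.reflect, _root_.reflect]
  linarith

theorem ProperElliptic.doublingCondition (hF : ProperElliptic c X₀ Tset F)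
    (hmod : HasSpaceTimeModulus σ C₀ X₀ Tset F) {D : Set (Eucl d)} {ξ₁ ξ₂ : Eucl d}
    (hD₁ : ∀ x ∈ D, x + ξ₁ ∈ X₀) (hD₂ : ∀ x ∈ D, x + ξ₂ ∈ X₀) {t₁ t₂ : ℝ} (ht₁ : t₁ ∈ Tset)
    (ht₂ : t₂ ∈ Tset) (ht : |t₁ - t₂| ≤ 1) :
    DoublingCondition D (fun M P r x => F M P r (x + ξ₁) t₁) (fun M P r x => F M P r (x + ξ₂) t₂)
      (σ ‖ξ₁ - ξ₂‖ + C₀ * |t₁ - t₂|) c σ := by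
  intro X Y hX hY p q r s δ hδ hXY hpq hrs x hx y hy
  have hspace := hmod Y q s _ (hD₂ x hx) _ (hD₂ y hy) _ ht₂ _ ht₂ (by simp)
  have htime := hmod Y q s _ (hD₁ x hx) _ (hD₂ x hx) _ ht₁ _ ht₂ ht
  rw [add_sub_add_right_eq_sub, sub_self, abs_zero, mul_zero, add_zero] at hspace
  rw [add_sub_add_left_eq_sub] at htime
  have hjet := hF X Y hX hY p q r s δ hδ hXY hpq hrs _ (hD₁ x hx) _ ht₁
  linarith [(abs_le.1 hspace).1, (abs_le.1 htime).1]

theorem UniformlyElliptic.le_apply_sub (hF : UniformlyElliptic lam Lam X₀ Tset F)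
    (hS : StructureCondition lam Lam gam ω X₀ Tset F) {N₁ N₂ : Matrix (Fin d) (Fin d) ℝ}
    (h₁ : N₁.PosSemidef) (h₂ : N₂.PosSemidef) (p : Eucl d) {r : ℝ} (hr : 0 ≤ r) {x : Eucl d}
    (hx : x ∈ X₀) {t : ℝ} (ht : t ∈ Tset) :
    F 0 0 0 x t + lam * specNorm N₂ - Lam * specNorm N₁ - gam * ‖p‖ ≤ F (N₁ - N₂) p r x t := by
  have hgain := (hF (N₁ - N₂) N₂ ((isSymm_of_posSemidef h₁).sub (isSymm_of_posSemidef h₂))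
    h₂ p r x hx t ht).2
  have hloss := (hF 0 N₁ Matrix.isSymm_zero h₁ p r x hx t ht).1
  have hproper := hS.apply_le_add (Matrix.isSymm_zero (n := Fin d)) p 0 hr hx ht
  rw [sub_add_cancel] at hgain
  rw [zero_add] at hloss
  rw [sub_zero] at hproper
  linarith

end Operators

/-! ### Exterior balls and barriers -/

section ExteriorBall

open scoped NNReal

/-- Every boundary point of `Ω` lies on a sphere of radius `R` whose open ball avoids
`closure Ω`. -/
def UniformExteriorBall {V : Type*} [SeminormedAddCommGroup V] (Ω : Set V) (R : ℝ) : Prop :=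
  ∀ y ∈ frontier Ω, ∃ c, ‖y - c‖ = R ∧ ∀ x ∈ closure Ω, R ≤ ‖x - c‖

theorem exists_forall_norm_sub_sub_fderiv_le {V W : Type*} [NormedAddCommGroup V] [NormedSpace ℝ V]
    [ProperSpace V] [NormedAddCommGroup W] [NormedSpace ℝ W] {f : V → W} (hf : ContDiff ℝ 2 f)
    {s : Set V} (hs : Bornology.IsBounded s) :
    ∃ C : ℝ≥0, ∀ x ∈ s, ∀ y ∈ s, ‖f x - f y - fderiv ℝ f y (x - y)‖ ≤ C * ‖x - y‖ ^ 2 := by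
  obtain ⟨ρ, hρ⟩ := hs.subset_closedBall 0
  have hf' : ContDiff ℝ 1 (fderiv ℝ f) := hf.fderiv_right (by norm_num)
  obtain ⟨C, hC⟩ := (hf'.locallyLipschitz.locallyLipschitzOn (s := closedBall 0 ρ))
    |>.exists_lipschitzOnWith_of_compact (isCompact_closedBall 0 ρ)
  refine ⟨C, fun x hx y hy => ?_⟩
  rw [pow_two, ← mul_assoc]
  refine (convex_segment y x).norm_image_sub_le_of_norm_fderiv_le' (𝕜 := ℝ)
    (fun z _ => hf.differentiable two_ne_zero z) (fun z hz => ?_)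
    (left_mem_segment ℝ y x) (right_mem_segment ℝ y x)
  have hz' : z ∈ closedBall 0 ρ := (convex_closedBall 0 ρ).segment_subset (hρ hy) (hρ hx) hz
  calc ‖fderiv ℝ f z - fderiv ℝ f y‖
      ≤ C * ‖z - y‖ := hC.norm_sub_le hz' (hρ hy)
    _ ≤ C * ‖x - y‖ := by
        gcongr
        exact norm_sub_le_of_mem_segment hz

theorem le_norm_sub_smul_of_inner_le {V : Type*} [SeminormedAddCommGroup V] [InnerProductSpace ℝ V]
    {ν v : V} {C R : ℝ} (hR : 0 ≤ R) (hν : 0 < ‖ν‖) (hCR : 2 * C * R ≤ ‖ν‖)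
    (hv : ⟪ν, v⟫ ≤ C * ‖v‖ ^ 2) : R ≤ ‖v - (R / ‖ν‖) • ν‖ := by
  have hnorm : ‖(R / ‖ν‖) • ν‖ = R := by
    rw [norm_smul, Real.norm_of_nonneg (by positivity), div_mul_cancel₀ _ hν.ne']
  have hinner : 2 * (R / ‖ν‖) * ⟪ν, v⟫ ≤ ‖v‖ ^ 2 :=
    calc 2 * (R / ‖ν‖) * ⟪ν, v⟫ ≤ 2 * (R / ‖ν‖) * (C * ‖v‖ ^ 2) := by gcongr
      _ = 2 * C * R / ‖ν‖ * ‖v‖ ^ 2 := by ring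
      _ ≤ 1 * ‖v‖ ^ 2 := by
          gcongr
          exact (div_le_one hν).2 hCR
      _ = ‖v‖ ^ 2 := one_mul _
  refine (sq_le_sq₀ hR (norm_nonneg _)).1 ?_
  rw [norm_sub_sq_real, hnorm, real_inner_smul_right, real_inner_comm]
  linarith

theorem HasSmoothBoundary.exists_uniformExteriorBall {d : ℕ} {Ω : Set (Eucl d)}
    (hΩ : HasSmoothBoundary Ω) (hb : Bornology.IsBounded Ω) :
    ∃ R > 0, UniformExteriorBall Ω R := by
  obtain ⟨f, hf, rfl, hdf⟩ := hΩ
  obtain ⟨C, hC⟩ := exists_forall_norm_sub_sub_fderiv_le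
    (mod_cast contDiff_infty.1 hf 2) hb.closure
  obtain ⟨m, hm, hmle⟩ : ∃ m > 0, ∀ y ∈ frontier {x | f x < 0}, m ≤ ‖fderiv ℝ f y‖ :=
    (hb.isCompact_closure.of_isClosed_subset isClosed_frontier
      frontier_subset_closure).exists_forall_le' (hf.continuous_fderiv (by simp)).norm.continuousOn
      fun y hy => norm_pos_iff.2 (hdf y hy)
  refine ⟨m / (2 * (C + 1)), by positivity, fun y hy => ?_⟩
  set R := m / (2 * (C + 1)) with hR
  set ν := gradient f y
  have hνm : m ≤ ‖ν‖ := by simpa [ν, gradient] using hmle y hy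
  have hν : 0 < ‖ν‖ := hm.trans_le hνm
  have hCR : 2 * C * R ≤ ‖ν‖ := by
    have hRm : 2 * (C + 1) * R = m := by rw [hR]; field_simp
    have hR0 : 0 ≤ R := by positivity
    linarith
  refine ⟨y + (R / ‖ν‖) • ν, ?_, fun x hx => ?_⟩
  · rw [sub_add_cancel_left, norm_neg, norm_smul, Real.norm_of_nonneg (by positivity),
      div_mul_cancel₀ _ hν.ne']
  have hfx : f x ≤ 0 := closure_lt_subset_le hf.continuous continuous_const hx
  have hfy : f y = 0 := frontier_lt_subset_eq hf.continuous continuous_const hy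
  have htaylor := hC x hx y (frontier_subset_closure hy)
  have hinner : ⟪ν, x - y⟫ = fderiv ℝ f y (x - y) := by simp [ν, gradient]
  rw [hfy, sub_zero, ← hinner] at htaylor
  rw [← sub_sub]
  refine le_norm_sub_smul_of_inner_le (by positivity) hν hCR ?_
  linarith [neg_le_of_abs_le htaylor]

end ExteriorBall

section Barrier

variable {d : ℕ} {lam Lam gam K A μ R : ℝ} {X₀ : Set (Eucl d)} {Tset : Set ℝ} {c x : Eucl d}
  {F : Matrix (Fin d) (Fin d) ℝ → Eucl d → ℝ → Eucl d → ℝ → ℝ} {ω : ℝ → ℝ → ℝ}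

theorem ViscSubsol.le_of_forall_lt {D : Set (Eucl d)}
    {G : Matrix (Fin d) (Fin d) ℝ → Eucl d → ℝ → Eucl d → ℝ} {g u b : Eucl d → ℝ}
    (hu : ViscSubsol D G g u) (hD : IsOpen D) (hDb : Bornology.IsBounded D)
    (huc : ContinuousOn u (closure D)) (hbc : ContinuousOn b (closure D))
    (hb : ∀ x ∈ D, ContDiffAt ℝ 2 b x) (hub : ∀ x ∈ frontier D, u x ≤ b x)
    (hstrict : ∀ x ∈ D, ∀ r, b x < r → g x < G (hessAt b x) (gradAt b x) r x) :
    ∀ x ∈ closure D, u x ≤ b x := by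
  intro x hx
  obtain ⟨y, hy, hmax⟩ := hDb.isCompact_closure.exists_isMaxOn ⟨x, hx⟩ (huc.sub hbc)
  have hxy : u x - b x ≤ u y - b y := hmax hx
  suffices u y ≤ b y by linarith
  rw [closure_eq_self_union_frontier] at hy
  rcases hy with hy | hy
  · by_contra! hlt
    exact (hstrict y hy _ hlt).not_ge <| hu y hy b (hb y hy)
      ((hmax.on_subset subset_closure).isLocalMax (hD.mem_nhds hy))
  · exact hub y hy

/-- The radial barrier that vanishes on the sphere of radius `R` about `c` and is positive
outside it. -/
def expBarrier (A μ R : ℝ) (c x : Eucl d) : ℝ :=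
  A * (Real.exp (-μ * R ^ 2) - Real.exp (-μ * ‖x - c‖ ^ 2))

theorem contDiff_expBarrier : ContDiff ℝ 2 (expBarrier A μ R c) := by
  have hsq : ContDiff ℝ 2 fun y : Eucl d => ‖y - c‖ ^ 2 :=
    (contDiff_id.sub contDiff_const).norm_sq ℝ
  exact contDiff_const.mul (contDiff_const.sub (contDiff_const.mul hsq).exp)

theorem hasFDerivAt_exp_neg_mul_norm_sq (μ : ℝ) (c x : Eucl d) :
    HasFDerivAt (fun y => Real.exp (-μ * ‖y - c‖ ^ 2))
      (-(2 * μ * Real.exp (-μ * ‖x - c‖ ^ 2)) • innerSL ℝ (x - c)) x := by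
  have hsq : HasFDerivAt (fun y : Eucl d => ‖y - c‖ ^ 2) (2 • innerSL ℝ (x - c)) x :=
    ((hasFDerivAt_id x).sub_const c).norm_sq
  refine (hsq.const_mul (-μ)).exp.congr_fderiv ?_
  ext v
  simp
  ring

theorem hasGradientAt_expBarrier (A μ R : ℝ) (c x : Eucl d) :
    HasGradientAt (expBarrier A μ R c)
      ((2 * μ * A * Real.exp (-μ * ‖x - c‖ ^ 2)) • (x - c)) x := by
  refine (((hasFDerivAt_exp_neg_mul_norm_sq μ c x).const_sub _).const_mul A).congr_fderiv ?_
  ext v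
  simp
  ring

theorem hessAt_expBarrier : hessAt (expBarrier A μ R c) x =
    (2 * μ * A * Real.exp (-μ * ‖x - c‖ ^ 2)) • (1 : Matrix (Fin d) (Fin d) ℝ) -
      (4 * μ ^ 2 * A * Real.exp (-μ * ‖x - c‖ ^ 2)) •
        Matrix.vecMulVec (WithLp.ofLp (x - c)) (WithLp.ofLp (x - c)) := by
  have hderiv := ((hasFDerivAt_exp_neg_mul_norm_sq μ c x).const_mul (2 * μ * A)).smul
    ((hasFDerivAt_id x).sub_const c)
  ext i j
  rw [hessAt_apply_of_hasGradientAt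
    (Eventually.of_forall (hasGradientAt_expBarrier A μ R c)) hderiv]
  by_cases hij : i = j
  · subst hij
    simp [Matrix.vecMulVec_apply, EuclideanSpace.inner_single_right]
    ring
  · simp [Matrix.vecMulVec_apply, EuclideanSpace.inner_single_right, hij, Ne.symm hij]
    ring

theorem expBarrier_nonneg (hA : 0 ≤ A) (hμ : 0 ≤ μ) (hR : 0 ≤ R) (hx : R ≤ ‖x - c‖) :
    0 ≤ expBarrier A μ R c x := by
  refine mul_nonneg hA (sub_nonneg.2 (Real.exp_le_exp.2 ?_))
  rw [neg_mul, neg_mul, neg_le_neg_iff]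
  gcongr

theorem expBarrier_le (hA : 0 ≤ A) (hμ : 0 ≤ μ) (hR : 0 ≤ R) (hx : R ≤ ‖x - c‖) :
    expBarrier A μ R c x ≤ A * (μ * (‖x - c‖ ^ 2 - R ^ 2)) := by
  set s := μ * (‖x - c‖ ^ 2 - R ^ 2) with hs
  have hs0 : 0 ≤ s := mul_nonneg hμ (sub_nonneg.2 (by gcongr))
  have hexp : Real.exp (-μ * ‖x - c‖ ^ 2) = Real.exp (-μ * R ^ 2) * Real.exp (-s) := by
    rw [← Real.exp_add]
    congr 1
    rw [hs]
    ring
  refine mul_le_mul_of_nonneg_left ?_ hA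
  calc Real.exp (-μ * R ^ 2) - Real.exp (-μ * ‖x - c‖ ^ 2)
      = Real.exp (-μ * R ^ 2) * (1 - Real.exp (-s)) := by rw [hexp]; ring
    _ ≤ Real.exp (-μ * R ^ 2) * s := by
        gcongr
        linarith [Real.one_sub_le_exp_neg s]
    _ ≤ 1 * s := by
        gcongr
        exact Real.exp_le_one_iff.2 (by rw [neg_mul]; exact neg_nonpos.2 (by positivity))
    _ = s := one_mul s

/-- The choice of `μ` makes the rank-one part of the Hessian of the barrier dominate its isotropic
part and the gradient term; `A` then absorbs `K`. -/
theorem exists_forall_le_pucci_expBarrier (hlam : 0 < lam) (hLam : 0 ≤ Lam) (hgam : 0 ≤ gam)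
    (hK : 0 ≤ K) (hR : 0 < R) {ρ : ℝ} (hρ : 0 ≤ ρ) :
    ∃ A ≥ 0, ∃ μ > 0, ∀ w : Eucl d, R ≤ ‖w‖ → ‖w‖ ≤ ρ →
      K ≤ lam * specNorm ((4 * μ ^ 2 * A * Real.exp (-μ * ‖w‖ ^ 2)) •
          Matrix.vecMulVec (WithLp.ofLp w) (WithLp.ofLp w))
        - Lam * specNorm ((2 * μ * A * Real.exp (-μ * ‖w‖ ^ 2)) • (1 : Matrix (Fin d) (Fin d) ℝ))
        - gam * ‖(2 * μ * A * Real.exp (-μ * ‖w‖ ^ 2)) • w‖ := by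
  obtain ⟨μ, hμ, hμeq⟩ : ∃ μ > 0, 2 * lam * μ * R ^ 2 = Lam + gam * ρ + 1 :=
    ⟨(Lam + gam * ρ + 1) / (2 * lam * R ^ 2), by positivity, by field_simp⟩
  obtain ⟨A, hA, hAeq⟩ : ∃ A ≥ 0, 2 * μ * A * Real.exp (-μ * ρ ^ 2) = K :=
    ⟨K / (2 * μ * Real.exp (-μ * ρ ^ 2)), by positivity, by field_simp⟩
  refine ⟨A, hA, μ, hμ, fun w hRw hwρ => ?_⟩
  set E := Real.exp (-μ * ‖w‖ ^ 2) with hE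
  have hEρ : Real.exp (-μ * ρ ^ 2) ≤ E := by
    rw [hE, neg_mul, neg_mul]
    gcongr
  have hgain : 1 ≤ 2 * lam * μ * ‖w‖ ^ 2 - Lam - gam * ‖w‖ := by
    have hRw' : 2 * lam * μ * R ^ 2 ≤ 2 * lam * μ * ‖w‖ ^ 2 := by gcongr
    have hgw : gam * ‖w‖ ≤ gam * ρ := by gcongr
    linarith
  have hw : w ≠ 0 := norm_pos_iff.1 (hR.trans_le hRw)
  calc K ≤ 2 * μ * A * E := by rw [← hAeq]; gcongr
    _ = (2 * μ * A * E) * 1 := (mul_one _).symm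
    _ ≤ (2 * μ * A * E) * (2 * lam * μ * ‖w‖ ^ 2 - Lam - gam * ‖w‖) := by gcongr
    _ = lam * (4 * μ ^ 2 * A * E * ‖w‖ ^ 2) - Lam * (2 * μ * A * E)
        - gam * (2 * μ * A * E * ‖w‖) := by ring
    _ ≤ _ := by
        rw [norm_smul, Real.norm_of_nonneg (show 0 ≤ 2 * μ * A * E by positivity)]
        gcongr
        · exact mul_norm_sq_le_specNorm_smul_vecMulVec _ hw
        · exact specNorm_smul_one_le (by positivity)

theorem UniformlyElliptic.exists_expBarrier_nonneg (hF : UniformlyElliptic lam Lam X₀ Tset F)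
    (hS : StructureCondition lam Lam gam ω X₀ Tset F) (hlam : 0 < lam) (hLam : 0 ≤ Lam)
    (hgam : 0 ≤ gam) (hK : 0 ≤ K) (hFK : ∀ x ∈ X₀, ∀ t ∈ Tset, -K ≤ F 0 0 0 x t) (hR : 0 < R)
    {ρ : ℝ} (hρ : 0 ≤ ρ) :
    ∃ A ≥ 0, ∃ μ > 0, ∀ c, ∀ x ∈ X₀, R ≤ ‖x - c‖ → ‖x - c‖ ≤ ρ → ∀ t ∈ Tset, ∀ r ≥ 0,
      0 ≤ F (hessAt (expBarrier A μ R c) x) (gradAt (expBarrier A μ R c) x) r x t := by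
  obtain ⟨A, hA, μ, hμ, hbarrier⟩ :=
    exists_forall_le_pucci_expBarrier (d := d) hlam hLam hgam hK hR hρ
  refine ⟨A, hA, μ, hμ, fun c x hx hRx hxρ t ht r hr => ?_⟩
  rw [gradAt_eq_of_hasGradientAt (hasGradientAt_expBarrier A μ R c x), hessAt_expBarrier]
  have hK' := hFK x hx t ht
  have hgain := hbarrier (x - c) hRx hxρ
  have hF' := hF.le_apply_sub hS
    (Matrix.PosSemidef.one.smul
      (show 0 ≤ 2 * μ * A * Real.exp (-μ * ‖x - c‖ ^ 2) by positivity))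
    ((Matrix.posSemidef_vecMulVec_self_star (WithLp.ofLp (x - c))).smul
      (show 0 ≤ 4 * μ ^ 2 * A * Real.exp (-μ * ‖x - c‖ ^ 2) by positivity))
    ((2 * μ * A * Real.exp (-μ * ‖x - c‖ ^ 2)) • (x - c)) hr hx ht
  rw [star_trivial] at hF'
  linarith

end Barrier

/-! ### Uniform estimates for the Rothe approximations -/

section Rothe

variable {d : ℕ} {lam Lam gam c C₀ K L R h : ℝ} {Ω : Set (Eucl d)}
  {F : Matrix (Fin d) (Fin d) ℝ → Eucl d → ℝ → Eucl d → ℝ → ℝ} {ω : ℝ → ℝ → ℝ} {σ : ℝ → ℝ}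
  {z : ℕ → Eucl d → ℝ}

/-- `z` is a sequence of Rothe approximations of step size `h` for the zero initial datum. -/
structure IsRotheScheme (Ω : Set (Eucl d))
    (F : Matrix (Fin d) (Fin d) ℝ → Eucl d → ℝ → Eucl d → ℝ → ℝ) (h : ℝ)
    (z : ℕ → Eucl d → ℝ) : Prop where
  zero : ∀ x, z 0 x = 0
  step : ∀ m, RotheStep Ω F h m (z m) (z (m + 1))

theorem mem_frontier_or_add_mem_frontier {ξ x : Eucl d}
    (hx : x ∈ frontier (Ω ∩ {w | w + ξ ∈ Ω})) : x ∈ frontier Ω ∨ x + ξ ∈ frontier Ω := by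
  rcases frontier_inter_subset _ _ hx with h | h
  · exact Or.inl h.1
  · exact Or.inr (((Homeomorph.addRight ξ).preimage_frontier Ω).superset h.2)

namespace IsRotheScheme

theorem continuousOn (hz : IsRotheScheme Ω F h z) (n : ℕ) : ContinuousOn (z n) (closure Ω) := by
  cases n with
  | zero => exact continuousOn_const.congr fun x _ => hz.zero x
  | succ n => exact (hz.step n).1

theorem eq_zero_of_mem_frontier (hz : IsRotheScheme Ω F h z) (n : ℕ) {x : Eucl d}
    (hx : x ∈ frontier Ω) : z n x = 0 := by
  cases n with
  | zero => exact hz.zero x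
  | succ n => exact (hz.step n).2.2 x hx

theorem viscSubsol (hz : IsRotheScheme Ω F h z) (n : ℕ) :
    ViscSubsol Ω (fun M P r x => F M P r x ((n + 1) * h) + r / h) (fun x => z n x / h)
      (z (n + 1)) :=
  (hz.step n).2.1.1

theorem viscSupersol (hz : IsRotheScheme Ω F h z) (n : ℕ) :
    ViscSupersol Ω (fun M P r x => F M P r x ((n + 1) * h) + r / h) (fun x => z n x / h)
      (z (n + 1)) :=
  (hz.step n).2.1.2

theorem neg (hz : IsRotheScheme Ω F h z) : IsRotheScheme Ω (reflect F) h fun n x => -z n x where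
  zero x := neg_eq_zero.2 (hz.zero x)
  step n := by
    refine ⟨(hz.continuousOn (n + 1)).neg, ⟨?_, ?_⟩,
      fun x hx => neg_eq_zero.2 (hz.eq_zero_of_mem_frontier (n + 1) hx)⟩
    · simpa only [reflect, neg_add, neg_div, neg_neg] using (hz.viscSupersol n).neg
    · simpa only [reflect, neg_add, neg_div, neg_neg] using (hz.viscSubsol n).neg

theorem le_of_forall_nonneg (hz : IsRotheScheme Ω F h z) (hh : 0 < h) (hΩ : IsOpen Ω)
    (hΩb : Bornology.IsBounded Ω) {b : Eucl d → ℝ} (hb : ContDiff ℝ 2 b)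
    (hb0 : ∀ x ∈ closure Ω, 0 ≤ b x)
    (hbF : ∀ x ∈ Ω, ∀ t ∈ Ici (0 : ℝ), ∀ r ≥ b x, 0 ≤ F (hessAt b x) (gradAt b x) r x t) (n : ℕ) :
    ∀ x ∈ closure Ω, z n x ≤ b x := by
  induction n with
  | zero => exact fun x hx => (hz.zero x).trans_le (hb0 x hx)
  | succ n ih =>
    refine (hz.viscSubsol n).le_of_forall_lt hΩ hΩb (hz.continuousOn _) hb.continuous.continuousOn
      (fun x _ => hb.contDiffAt) (fun x hx => ?_) fun x hx r hr => ?_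
    · exact (hz.eq_zero_of_mem_frontier _ hx).trans_le (hb0 x (frontier_subset_closure hx))
    · have hdiv : z n x / h < r / h := by
        gcongr
        exact (ih x (subset_closure hx)).trans_lt hr
      have hnonneg := hbF x hx ((n + 1) * h) (mem_Ici.2 (by positivity)) r hr.le
      linarith

theorem one_le (hz : IsRotheScheme Ω F h z) (hh : 0 < h) (hΩ : IsOpen Ω)
    (hΩb : Bornology.IsBounded Ω) (hF : ProperElliptic c (closure Ω) (Ici 0) F) (hK : 0 ≤ K)
    (hFK : ∀ x ∈ closure Ω, ∀ t ∈ Ici (0 : ℝ), -K ≤ F 0 0 0 x t) :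
    ∀ x ∈ closure Ω, z 1 x ≤ K * h := by
  have hKh : 0 ≤ K * h := by positivity
  refine (hz.viscSubsol 0).le_of_forall_lt hΩ hΩb (hz.continuousOn 1) continuousOn_const
    (fun x _ => contDiffAt_const) (fun x hx => ?_) fun x hx r hr => ?_
  · exact (hz.eq_zero_of_mem_frontier 1 hx).trans_le hKh
  have hgrad : gradAt (fun _ => K * h) x = 0 :=
    gradAt_eq_of_hasGradientAt (hasGradientAt_const x (K * h))
  have hhess : hessAt (fun _ => K * h) x = 0 := by
    ext i j
    simp [hessAt]
  have ht : (((0 : ℕ) : ℝ) + 1) * h ∈ Ici (0 : ℝ) := mem_Ici.2 (by positivity)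
  have hrK : K < r / h := (lt_div_iff₀ hh).2 hr
  have hmono := hF 0 0 Matrix.isSymm_zero Matrix.isSymm_zero 0 0 r 0 0 le_rfl (by simp) (by simp)
    (hKh.trans hr.le) x (subset_closure hx) _ ht
  have hK' := hFK x (subset_closure hx) _ ht
  rw [mul_zero, add_zero] at hmono
  rw [hgrad, hhess, hz.zero, zero_div]
  exact neg_lt_iff_pos_add.1 ((neg_lt_neg hrK).trans_le (hK'.trans hmono))

/-- Consecutive approximations solve equations whose operators differ by at most `C₀ h`, so each
comparison adds `C₀ h²` to the bound on the increment. -/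
theorem succ_sub_le (hz : IsRotheScheme Ω F h z) (hh : h ∈ Ioc (0 : ℝ) 1) (hΩ : IsOpen Ω)
    (hΩb : Bornology.IsBounded Ω) (hF : ProperElliptic c (closure Ω) (Ici 0) F)
    (hmod : HasSpaceTimeModulus σ C₀ (closure Ω) (Ici 0) F) (hσ : Tendsto σ (𝓝 0) (𝓝 0))
    (hC₀ : 0 ≤ C₀) (hK : 0 ≤ K) (hFK : ∀ x ∈ closure Ω, ∀ t ∈ Ici (0 : ℝ), -K ≤ F 0 0 0 x t)
    (n : ℕ) : ∀ x ∈ closure Ω, z (n + 1) x - z n x ≤ (K + n * C₀ * h) * h := by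
  have hh0 : 0 < h := hh.1
  induction n with
  | zero => simpa [hz.zero] using hz.one_le hh0 hΩ hΩb hF hK hFK
  | succ n ih =>
    have hspan : |(((n + 1 : ℕ) : ℝ) + 1) * h - ((n : ℝ) + 1) * h| = h := by
      rw [← sub_mul]
      simp [abs_of_pos hh0]
    have hD : ∀ x ∈ Ω, x + 0 ∈ closure Ω := fun x hx => by simpa using subset_closure hx
    have hdouble := hF.doublingCondition hmod hD hD (t₁ := ((n + 1 : ℕ) + 1) * h)
      (t₂ := (n + 1) * h) (mem_Ici.2 (by positivity)) (mem_Ici.2 (by positivity))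
      (hspan.trans_le hh.2)
    simp only [add_zero, sub_zero, norm_zero, eq_of_tendsto_nhds hσ, zero_add, hspan] at hdouble
    have hcomp := hdouble.comparison hΩ hΩb hσ hh0 (hz.continuousOn _) (hz.continuousOn _)
      (hz.continuousOn n) (hz.viscSubsol (n + 1)) (hz.viscSupersol n) le_rfl
      (fun x hx => by simp [hz.eq_zero_of_mem_frontier _ hx])
      (fun x hx => ih x (subset_closure hx))
    refine fun x hx => (hcomp x hx).trans (max_le (by positivity) (le_of_eq ?_))
    push_cast
    ring

theorem abs_succ_sub_le (hz : IsRotheScheme Ω F h z) (hh : h ∈ Ioc (0 : ℝ) 1) (hΩ : IsOpen Ω)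
    (hΩb : Bornology.IsBounded Ω) (hF : ProperElliptic c (closure Ω) (Ici 0) F)
    (hmod : HasSpaceTimeModulus σ C₀ (closure Ω) (Ici 0) F) (hσ : Tendsto σ (𝓝 0) (𝓝 0))
    (hC₀ : 0 ≤ C₀) (hK : 0 ≤ K) (hFK : ∀ x ∈ closure Ω, ∀ t ∈ Ici (0 : ℝ), |F 0 0 0 x t| ≤ K)
    (n : ℕ) : ∀ x ∈ closure Ω, |z (n + 1) x - z n x| ≤ (K + n * C₀ * h) * h := by
  intro x hx
  have hupper := hz.succ_sub_le hh hΩ hΩb hF hmod hσ hC₀ hK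
    (fun x hx t ht => neg_le_of_abs_le (hFK x hx t ht)) n x hx
  have hlower := hz.neg.succ_sub_le hh hΩ hΩb hF.reflect hmod.reflect hσ hC₀ hK
    (fun x hx t ht => by simpa [reflect] using le_of_abs_le (hFK x hx t ht)) n x hx
  exact abs_le.2 ⟨by linarith, hupper⟩

theorem abs_sub_le_of_mem_frontier (hz : IsRotheScheme Ω F h z) {n : ℕ}
    (hbd : ∀ y ∈ frontier Ω, ∀ x ∈ closure Ω, |z n x| ≤ L * ‖x - y‖) {x y : Eucl d}
    (hx : x ∈ closure Ω) (hy : y ∈ closure Ω) (hxy : x ∈ frontier Ω ∨ y ∈ frontier Ω) :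
    |z n x - z n y| ≤ L * ‖x - y‖ := by
  rcases hxy with hx' | hy'
  · simpa [hz.eq_zero_of_mem_frontier n hx', norm_sub_rev] using hbd x hx' y hy
  · simpa [hz.eq_zero_of_mem_frontier n hy'] using hbd y hy' x hx

/-- The translate of `z (n + 1)` by `ξ` solves the equation with the coefficients evaluated at
`w + ξ`, which differs from the equation at `w` by at most `σ ‖ξ‖`. -/
theorem succ_add_sub_le (hz : IsRotheScheme Ω F h z) (hh : 0 < h) (hΩ : IsOpen Ω)
    (hΩb : Bornology.IsBounded Ω) (hF : ProperElliptic c (closure Ω) (Ici 0) F)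
    (hmod : HasSpaceTimeModulus σ C₀ (closure Ω) (Ici 0) F) (hσ : Tendsto σ (𝓝 0) (𝓝 0))
    {n : ℕ} {ξ : Eucl d} {m m' : ℝ} (hm : 0 ≤ m)
    (hbd : ∀ w ∈ closure Ω, w + ξ ∈ closure Ω → w ∈ frontier Ω ∨ w + ξ ∈ frontier Ω →
      z (n + 1) (w + ξ) - z (n + 1) w ≤ m)
    (hprev : ∀ w ∈ Ω, w + ξ ∈ Ω → z n (w + ξ) - z n w ≤ m') :
    ∀ w ∈ Ω, w + ξ ∈ Ω → z (n + 1) (w + ξ) - z (n + 1) w ≤ max m (m' + h * σ ‖ξ‖) := by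
  have hcont : Continuous fun w => w + ξ := by fun_prop
  let D := Ω ∩ {w | w + ξ ∈ Ω}
  have hcl : closure D ⊆ closure Ω := closure_mono inter_subset_left
  have hclξ : MapsTo (fun w => w + ξ) (closure D) (closure Ω) :=
    (show MapsTo (fun w => w + ξ) D Ω from fun _ hw => hw.2).closure hcont
  have hdouble := hF.doublingCondition hmod (D := D) (ξ₁ := ξ) (ξ₂ := 0)
    (t₁ := (n + 1) * h) (t₂ := (n + 1) * h) (fun w hw => subset_closure hw.2)
    (fun w hw => by simpa using subset_closure hw.1) (mem_Ici.2 (by positivity))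
    (mem_Ici.2 (by positivity)) (by simp)
  simp only [add_zero, sub_zero, sub_self, abs_zero, mul_zero] at hdouble
  have hcomp := hdouble.comparison (hΩ.inter (hΩ.preimage hcont)) (hΩb.subset inter_subset_left)
    hσ hh ((hz.continuousOn (n + 1)).comp hcont.continuousOn hclξ)
    ((hz.continuousOn (n + 1)).mono hcl) ((hz.continuousOn n).mono hcl)
    (fun w hw => (hz.viscSubsol n).translate ξ w hw.2) (fun w hw => hz.viscSupersol n w hw.1) hm
    (fun w hw => hbd w (hcl (frontier_subset_closure hw)) (hclξ (frontier_subset_closure hw))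
      (mem_frontier_or_add_mem_frontier hw))
    (fun w hw => hprev w hw.1 hw.2)
  exact fun w hw hwξ => hcomp w (subset_closure ⟨hw, hwξ⟩)

theorem sub_le (hz : IsRotheScheme Ω F h z) (hh : 0 < h) (hΩ : IsOpen Ω)
    (hΩb : Bornology.IsBounded Ω) (hF : ProperElliptic c (closure Ω) (Ici 0) F)
    (hmod : HasSpaceTimeModulus σ C₀ (closure Ω) (Ici 0) F) (hσ : Tendsto σ (𝓝 0) (𝓝 0))
    (hL : 0 ≤ L) (hbd : ∀ n, ∀ y ∈ frontier Ω, ∀ x ∈ closure Ω, |z n x| ≤ L * ‖x - y‖) (n : ℕ) :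
    ∀ x ∈ closure Ω, ∀ y ∈ closure Ω,
      z n x - z n y ≤ L * ‖x - y‖ + n * h * σ ‖x - y‖ := by
  induction n with
  | zero =>
    intro x _ y _
    simp only [hz.zero, sub_self, Nat.cast_zero, zero_mul, add_zero]
    positivity
  | succ n ih =>
    intro x hx y hy
    have hσ0 : 0 ≤ σ ‖x - y‖ := hmod.nonneg ⟨0, self_mem_Ici⟩ hx hy
    have hle : L * ‖x - y‖ ≤ L * ‖x - y‖ + (n + 1 : ℕ) * h * σ ‖x - y‖ :=
      le_add_of_nonneg_right (by positivity)
    by_cases hxy : x ∈ frontier Ω ∨ y ∈ frontier Ω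
    · exact (le_of_abs_le (hz.abs_sub_le_of_mem_frontier (hbd (n + 1)) hx hy hxy)).trans hle
    have hmem {w : Eucl d} (hw : w ∈ closure Ω) (hw' : w ∉ frontier Ω) : w ∈ Ω := by
      rw [closure_eq_self_union_frontier] at hw
      exact hw.resolve_right hw'
    rw [not_or] at hxy
    have hcomp := hz.succ_add_sub_le hh hΩ hΩb hF hmod hσ (n := n) (ξ := x - y)
      (m := L * ‖x - y‖) (m' := L * ‖x - y‖ + n * h * σ ‖x - y‖) (by positivity)
      (fun w hw hwξ hfr => by
        simpa using
          le_of_abs_le (hz.abs_sub_le_of_mem_frontier (hbd (n + 1)) hwξ hw hfr.symm))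
      (fun w hw hwξ => by simpa using ih _ (subset_closure hwξ) w (subset_closure hw))
      y (hmem hy hxy.2) (by simpa using hmem hx hxy.1)
    rw [add_sub_cancel] at hcomp
    refine hcomp.trans (max_le hle (le_of_eq ?_))
    push_cast
    ring

theorem abs_sub_le (hz : IsRotheScheme Ω F h z) (hh : 0 < h) (hΩ : IsOpen Ω)
    (hΩb : Bornology.IsBounded Ω) (hF : ProperElliptic c (closure Ω) (Ici 0) F)
    (hmod : HasSpaceTimeModulus σ C₀ (closure Ω) (Ici 0) F) (hσ : Tendsto σ (𝓝 0) (𝓝 0))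
    (hL : 0 ≤ L) (hbd : ∀ n, ∀ y ∈ frontier Ω, ∀ x ∈ closure Ω, |z n x| ≤ L * ‖x - y‖) (n : ℕ)
    {x y : Eucl d} (hx : x ∈ closure Ω) (hy : y ∈ closure Ω) :
    |z n x - z n y| ≤ L * ‖x - y‖ + n * h * σ ‖x - y‖ := by
  have hle := hz.sub_le hh hΩ hΩb hF hmod hσ hL hbd n
  refine abs_sub_le_iff.2 ⟨hle x hx y hy, ?_⟩
  rw [norm_sub_rev]
  exact hle y hy x hx

end IsRotheScheme

theorem UniformlyElliptic.exists_rothe_le_mul_norm_sub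
    (hF : UniformlyElliptic lam Lam (closure Ω) (Ici 0) F)
    (hS : StructureCondition lam Lam gam ω (closure Ω) (Ici 0) F) (hlam : 0 < lam)
    (hLam : 0 ≤ Lam) (hgam : 0 ≤ gam) (hK : 0 ≤ K)
    (hFK : ∀ x ∈ closure Ω, ∀ t ∈ Ici (0 : ℝ), -K ≤ F 0 0 0 x t) (hΩ : IsOpen Ω)
    (hΩb : Bornology.IsBounded Ω) (hR : 0 < R) (hball : UniformExteriorBall Ω R) :
    ∃ L ≥ 0, ∀ h > 0, ∀ z, IsRotheScheme Ω F h z →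
      ∀ n, ∀ y ∈ frontier Ω, ∀ x ∈ closure Ω, z n x ≤ L * ‖x - y‖ := by
  let ρ := diam (closure Ω) + R
  have hρ : 0 ≤ ρ := add_nonneg diam_nonneg hR.le
  obtain ⟨A, hA, μ, hμ, hbarrier⟩ := hF.exists_expBarrier_nonneg hS hlam hLam hgam hK hFK hR hρ
  refine ⟨A * μ * (2 * ρ), by positivity, fun h hh z hz n y hy x hx => ?_⟩
  obtain ⟨c, hyc, hc⟩ := hball y hy
  have hdist (w : Eucl d) : ‖w - c‖ ≤ ‖w - y‖ + R :=
    hyc ▸ norm_sub_le_norm_sub_add_norm_sub w y c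
  have hwρ {w : Eucl d} (hw : w ∈ closure Ω) : ‖w - c‖ ≤ ρ := by
    have hdiam := dist_le_diam_of_mem hΩb.closure hw (frontier_subset_closure hy)
    rw [dist_eq_norm] at hdiam
    exact (hdist w).trans (add_le_add hdiam le_rfl)
  have hRρ : R ≤ ρ := (hc x hx).trans (hwρ hx)
  calc z n x ≤ expBarrier A μ R c x :=
        hz.le_of_forall_nonneg hh hΩ hΩb contDiff_expBarrier
          (fun w hw => expBarrier_nonneg hA hμ.le hR.le (hc w hw))
          (fun w hw t ht r hr => hbarrier c w (subset_closure hw) (hc w (subset_closure hw))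
            (hwρ (subset_closure hw)) t ht r
            ((expBarrier_nonneg hA hμ.le hR.le (hc w (subset_closure hw))).trans hr)) n x hx
    _ ≤ A * (μ * (‖x - c‖ ^ 2 - R ^ 2)) := expBarrier_le hA hμ.le hR.le (hc x hx)
    _ = A * μ * ((‖x - c‖ + R) * (‖x - c‖ - R)) := by ring
    _ ≤ A * μ * (2 * ρ * ‖x - y‖) := by
        gcongr
        · exact sub_nonneg.2 (hc x hx)
        · linarith [hwρ hx]
        · linarith [hdist x]
    _ = A * μ * (2 * ρ) * ‖x - y‖ := by ring

theorem UniformlyElliptic.exists_abs_rothe_le_mul_norm_sub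
    (hF : UniformlyElliptic lam Lam (closure Ω) (Ici 0) F)
    (hS : StructureCondition lam Lam gam ω (closure Ω) (Ici 0) F) (hlam : 0 < lam)
    (hLam : 0 ≤ Lam) (hgam : 0 ≤ gam) (hK : 0 ≤ K)
    (hFK : ∀ x ∈ closure Ω, ∀ t ∈ Ici (0 : ℝ), |F 0 0 0 x t| ≤ K) (hΩ : IsOpen Ω)
    (hΩb : Bornology.IsBounded Ω) (hR : 0 < R) (hball : UniformExteriorBall Ω R) :
    ∃ L ≥ 0, ∀ h > 0, ∀ z, IsRotheScheme Ω F h z →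
      ∀ n, ∀ y ∈ frontier Ω, ∀ x ∈ closure Ω, |z n x| ≤ L * ‖x - y‖ := by
  obtain ⟨L₁, hL₁, hupper⟩ := hF.exists_rothe_le_mul_norm_sub hS hlam hLam hgam hK
    (fun x hx t ht => neg_le_of_abs_le (hFK x hx t ht)) hΩ hΩb hR hball
  obtain ⟨L₂, -, hlower⟩ := hF.reflect.exists_rothe_le_mul_norm_sub hS.reflect hlam hLam hgam hK
    (fun x hx t ht => by simpa [_root_.reflect] using le_of_abs_le (hFK x hx t ht)) hΩ
    hΩb hR hball
  refine ⟨max L₁ L₂, le_max_of_le_left hL₁, fun h hh z hz n y hy x hx => abs_le'.2 ⟨?_, ?_⟩⟩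
  · refine (hupper h hh z hz n y hy x hx).trans ?_
    gcongr
    exact le_max_left _ _
  · refine (hlower h hh _ hz.neg n y hy x hx).trans ?_
    gcongr
    exact le_max_right _ _

end Rothe

/-! ### Interpolation and compactness -/

section Interpolation

variable {d : ℕ} {z : ℕ → Eucl d → ℝ} {B C T h s t : ℝ} {x y : Eucl d}

theorem natFloor_div_mul_le (hh : 0 < h) (ht : 0 ≤ t) : ⌊t / h⌋₊ * h ≤ t :=
  (le_div_iff₀ hh).1 (Nat.floor_le (div_nonneg ht hh.le))

theorem lt_natFloor_div_add_one_mul (hh : 0 < h) (t : ℝ) : t < (⌊t / h⌋₊ + 1) * h :=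
  (div_lt_iff₀ hh).1 (Nat.lt_floor_add_one (t / h))

theorem rotheInterp_eq_add (hh : h ≠ 0) (z : ℕ → Eucl d → ℝ) (x : Eucl d) (t : ℝ) :
    rotheInterp z h x t = z ⌊t / h⌋₊ x +
      (t - ⌊t / h⌋₊ * h) / h * (z (⌊t / h⌋₊ + 1) x - z ⌊t / h⌋₊ x) := by
  unfold rotheInterp
  field_simp
  ring

theorem rotheInterp_eq_sub (hh : h ≠ 0) (z : ℕ → Eucl d → ℝ) (x : Eucl d) (t : ℝ) :
    rotheInterp z h x t = z (⌊t / h⌋₊ + 1) x -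
      ((⌊t / h⌋₊ + 1) * h - t) / h * (z (⌊t / h⌋₊ + 1) x - z ⌊t / h⌋₊ x) := by
  unfold rotheInterp
  field_simp
  ring

theorem abs_rotheInterp_sub_le_of_forall (hh : h ∈ Ioc (0 : ℝ) 1) (ht : t ∈ Icc 0 T)
    (hz : ∀ n : ℕ, n * h ≤ T + 1 → |z n x - z n y| ≤ B) :
    |rotheInterp z h x t - rotheInterp z h y t| ≤ B := by
  have hfloor := natFloor_div_mul_le hh.1 ht.1
  have hceil := lt_natFloor_div_add_one_mul hh.1 t
  unfold rotheInterp
  set m := ⌊t / h⌋₊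
  have hm : |z m x - z m y| ≤ B := hz m (by linarith [ht.2])
  have hm' : |z (m + 1) x - z (m + 1) y| ≤ B := hz (m + 1) (by push_cast; linarith [ht.2, hh.2])
  obtain ⟨α, hα⟩ : ∃ α, α = ((m + 1 : ℝ) * h - t) / h := ⟨_, rfl⟩
  obtain ⟨β, hβ⟩ : ∃ β, β = (t - m * h) / h := ⟨_, rfl⟩
  have hα0 : 0 ≤ α := hα ▸ div_nonneg (sub_nonneg.2 hceil.le) hh.1.le
  have hβ0 : 0 ≤ β := hβ ▸ div_nonneg (sub_nonneg.2 hfloor) hh.1.le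
  have hαβ : α + β = 1 := by
    rw [hα, hβ, ← add_div, div_eq_one_iff_eq hh.1.ne']
    ring
  rw [← hα, ← hβ]
  calc |α * z m x + β * z (m + 1) x - (α * z m y + β * z (m + 1) y)|
      = |α * (z m x - z m y) + β * (z (m + 1) x - z (m + 1) y)| := by ring_nf
    _ ≤ α * |z m x - z m y| + β * |z (m + 1) x - z (m + 1) y| := by
        simpa only [abs_mul, abs_of_nonneg hα0, abs_of_nonneg hβ0] using
          abs_add_le (α * (z m x - z m y)) (β * (z (m + 1) x - z (m + 1) y))
    _ ≤ α * B + β * B := by gcongr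
    _ = B := by rw [← add_mul, hαβ, one_mul]

theorem abs_sub_le_mul_of_forall_abs_succ_sub_le {a : ℕ → ℝ} {k m : ℕ} (hkm : k ≤ m)
    (ha : ∀ n ∈ Ico k m, |a (n + 1) - a n| ≤ B) : |a m - a k| ≤ (m - k) * B := by
  have hsum := dist_le_Ico_sum_of_dist_le hkm (f := a) (d := fun _ => B)
    fun hk hm => by simpa [Real.dist_eq, abs_sub_comm] using ha _ ⟨hk, hm⟩
  simpa [Real.dist_eq, abs_sub_comm (a m), Nat.cast_sub hkm] using hsum

theorem abs_rotheInterp_sub_le_mul (hh : 0 < h)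
    (hz : ∀ n : ℕ, n * h ≤ T → |z (n + 1) x - z n x| ≤ C * h) (ht : t ∈ Icc 0 T)
    (hs : s ∈ Icc 0 T) : |rotheInterp z h x t - rotheInterp z h x s| ≤ C * |t - s| := by
  wlog hst : s ≤ t generalizing t s
  · rw [abs_sub_comm, abs_sub_comm t s]
    exact this hs ht (le_of_not_ge hst)
  have hcell (r : ℝ) (n : ℕ) (hr : 0 ≤ r) (hn : n * h ≤ T) :
      |r / h * (z (n + 1) x - z n x)| ≤ C * r := by
    rw [abs_mul, abs_of_nonneg (by positivity)]
    calc r / h * |z (n + 1) x - z n x| ≤ r / h * (C * h) := by gcongr; exact hz n hn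
      _ = C * r := by field_simp
  have hfloor_t := natFloor_div_mul_le hh ht.1
  have hfloor_s := natFloor_div_mul_le hh hs.1
  have hceil_s := (lt_natFloor_div_add_one_mul hh s).le
  have hmono : ⌊s / h⌋₊ ≤ ⌊t / h⌋₊ := by gcongr
  have heq_t := rotheInterp_eq_add hh.ne' z x t
  have heq_s := rotheInterp_eq_add hh.ne' z x s
  have heq_s' := rotheInterp_eq_sub hh.ne' z x s
  generalize ⌊t / h⌋₊ = m at *
  generalize ⌊s / h⌋₊ = k at *
  rw [abs_of_nonneg (sub_nonneg.2 hst)]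
  rcases hmono.eq_or_lt with rfl | hkm
  · rw [heq_t, heq_s, add_sub_add_left_eq_sub, ← sub_mul, ← sub_div, sub_sub_sub_cancel_right]
    exact hcell _ k (sub_nonneg.2 hst) (hfloor_s.trans hs.2)
  have hfirst := hcell _ k (sub_nonneg.2 hceil_s) (hfloor_s.trans hs.2)
  have hlast := hcell _ m (sub_nonneg.2 hfloor_t) (hfloor_t.trans ht.2)
  have hmid := abs_sub_le_mul_of_forall_abs_succ_sub_le (a := fun n => z n x) hkm
    fun n hn => hz n <| le_trans (by gcongr; exact hn.2.le) (hfloor_t.trans ht.2)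
  rw [heq_t, heq_s', show ∀ a b c e : ℝ, a + b - (c - e) = b + (a - c) + e by intros; ring]
  refine (abs_add_three _ _ _).trans ?_
  push_cast at hmid
  linarith

end Interpolation

section Compactness

variable {α β : Type*} [TopologicalSpace α] {S : Set α}

theorem exists_subseq_tendstoUniformlyOn_of_equicontinuousOn [MetricSpace β] (hS : IsCompact S)
    {f : ℕ → α → β} {B : Set β} (hB : IsCompact B) (hfB : ∀ k, MapsTo (f k) S B)
    (hf : EquicontinuousOn f S) :
    ∃ ψ : ℕ → ℕ, StrictMono ψ ∧ ∃ U : α → β, ContinuousOn U S ∧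
      TendstoUniformlyOn (fun k => f (ψ k)) U atTop S := by
  have : CompactSpace S := isCompact_iff_compactSpace.1 hS
  have hequi : Equicontinuous (S.domRestrict ∘ f) := (equicontinuous_restrict_iff f).2 hf
  let g (k : ℕ) : BoundedContinuousFunction S β :=
    BoundedContinuousFunction.mkOfCompact ⟨S.domRestrict (f k), hequi.continuous k⟩
  have hcpt : IsCompact (closure (range g)) := by
    refine BoundedContinuousFunction.arzela_ascoli B hB (range g) ?_ fun x V hV => ?_
    · rintro _ x ⟨k, rfl⟩
      exact hfB k x.2
    · filter_upwards [hequi x V hV] with y hy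
      rintro ⟨_, k, rfl⟩
      exact hy k
  obtain ⟨G, -, ψ, hψ, hlim⟩ := hcpt.tendsto_subseq (x := g) fun k => subset_closure ⟨k, rfl⟩
  have hext : Function.extend Subtype.val G (f 0) ∘ Subtype.val = G :=
    Function.extend_comp Subtype.val_injective G (f 0)
  refine ⟨ψ, hψ, Function.extend Subtype.val G (f 0), ?_, ?_⟩
  · rw [continuousOn_iff_continuous_domRestrict]
    exact G.continuous.congr fun x => (congrFun hext x).symm
  · rw [tendstoUniformlyOn_iff_tendstoUniformly_comp_coe, hext]
    exact BoundedContinuousFunction.tendsto_iff_tendstoUniformly.1 hlim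

theorem equicontinuousOn_of_dist_le [PseudoMetricSpace β] {ι : Type*} {f : ι → α → β}
    {b : α → α → ℝ} (hb : ∀ x ∈ S, Tendsto (b x) (𝓝[S] x) (𝓝 0))
    (hf : ∀ i, ∀ x ∈ S, ∀ y ∈ S, dist (f i x) (f i y) ≤ b x y) : EquicontinuousOn f S := by
  intro x hx V hV
  obtain ⟨ε, hε, hεV⟩ := Metric.mem_uniformity_dist.1 hV
  filter_upwards [(hb x hx).eventually_lt_const hε, self_mem_nhdsWithin] with y hyε hyS i
  exact hεV ((hf i x hx y hyS).trans_lt hyε)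

end Compactness

section Limit

variable {d : ℕ} {T lam Lam gam c C₀ K L R h : ℝ} {Ω : Set (Eucl d)}
  {F : Matrix (Fin d) (Fin d) ℝ → Eucl d → ℝ → Eucl d → ℝ → ℝ} {ω : ℝ → ℝ → ℝ} {σ : ℝ → ℝ}
  {z : ℕ → Eucl d → ℝ} {x y : Eucl d} {s t : ℝ}

theorem IsRotheScheme.rotheInterp_zero (hz : IsRotheScheme Ω F h z) (x : Eucl d) :
    rotheInterp z h x 0 = 0 := by
  simp [rotheInterp, hz.zero]

theorem IsRotheScheme.abs_rotheInterp_sub_le_time (hz : IsRotheScheme Ω F h z)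
    (hh : h ∈ Ioc (0 : ℝ) 1) (hΩ : IsOpen Ω) (hΩb : Bornology.IsBounded Ω)
    (hF : ProperElliptic c (closure Ω) (Ici 0) F)
    (hmod : HasSpaceTimeModulus σ C₀ (closure Ω) (Ici 0) F) (hσ : Tendsto σ (𝓝 0) (𝓝 0))
    (hC₀ : 0 ≤ C₀) (hK : 0 ≤ K) (hFK : ∀ x ∈ closure Ω, ∀ t ∈ Ici (0 : ℝ), |F 0 0 0 x t| ≤ K)
    (hx : x ∈ closure Ω) (ht : t ∈ Icc 0 T) (hs : s ∈ Icc 0 T) :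
    |rotheInterp z h x t - rotheInterp z h x s| ≤ (K + C₀ * T) * |t - s| := by
  refine abs_rotheInterp_sub_le_mul hh.1 (fun n hn => ?_) ht hs
  refine (hz.abs_succ_sub_le hh hΩ hΩb hF hmod hσ hC₀ hK hFK n x hx).trans ?_
  rw [mul_comm (n : ℝ) C₀, mul_assoc]
  have hh0 := hh.1.le
  gcongr

theorem IsRotheScheme.abs_rotheInterp_sub_le_space (hz : IsRotheScheme Ω F h z)
    (hh : h ∈ Ioc (0 : ℝ) 1) (hΩ : IsOpen Ω) (hΩb : Bornology.IsBounded Ω)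
    (hF : ProperElliptic c (closure Ω) (Ici 0) F)
    (hmod : HasSpaceTimeModulus σ C₀ (closure Ω) (Ici 0) F) (hσ : Tendsto σ (𝓝 0) (𝓝 0))
    (hL : 0 ≤ L) (hbd : ∀ n, ∀ y ∈ frontier Ω, ∀ x ∈ closure Ω, |z n x| ≤ L * ‖x - y‖)
    (hx : x ∈ closure Ω) (hy : y ∈ closure Ω) (ht : t ∈ Icc 0 T) :
    |rotheInterp z h x t - rotheInterp z h y t| ≤ L * ‖x - y‖ + (T + 1) * σ ‖x - y‖ := by
  have hσ0 : 0 ≤ σ ‖x - y‖ := hmod.nonneg ⟨0, self_mem_Ici⟩ hx hy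
  refine abs_rotheInterp_sub_le_of_forall hh ht fun n hn => ?_
  refine (hz.abs_sub_le hh.1 hΩ hΩb hF hmod hσ hL hbd n hx hy).trans ?_
  gcongr

theorem exists_subseq_tendstoUniformlyOn_rotheInterp {C : ℝ}
    (hσ : Tendsto σ (𝓝 0) (𝓝 0)) (hΩb : Bornology.IsBounded Ω) {hk : ℕ → ℝ}
    {Z : ℕ → ℕ → Eucl d → ℝ} (hZ : ∀ k, IsRotheScheme Ω F (hk k) (Z k))
    (htime : ∀ k, ∀ x ∈ closure Ω, ∀ t ∈ Icc 0 T, ∀ s ∈ Icc 0 T,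
      |rotheInterp (Z k) (hk k) x t - rotheInterp (Z k) (hk k) x s| ≤ C * |t - s|)
    (hspace : ∀ k, ∀ x ∈ closure Ω, ∀ y ∈ closure Ω, ∀ t ∈ Icc 0 T,
      |rotheInterp (Z k) (hk k) x t - rotheInterp (Z k) (hk k) y t|
        ≤ L * ‖x - y‖ + (T + 1) * σ ‖x - y‖) :
    ∃ ψ : ℕ → ℕ, StrictMono ψ ∧
      ∃ U : Eucl d × ℝ → ℝ, ContinuousOn U (closure Ω ×ˢ Icc 0 T) ∧
        TendstoUniformlyOn
          (fun k (p : Eucl d × ℝ) => rotheInterp (Z (ψ k)) (hk (ψ k)) p.1 p.2)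
          U atTop (closure Ω ×ˢ Icc 0 T) := by
  refine exists_subseq_tendstoUniformlyOn_of_equicontinuousOn
    (f := fun k (p : Eucl d × ℝ) => rotheInterp (Z k) (hk k) p.1 p.2)
    (hΩb.isCompact_closure.prod isCompact_Icc) (isCompact_Icc (a := -(|C| * T)) (b := |C| * T))
    (fun k p hp => abs_le.1 ?_)
    (equicontinuousOn_of_dist_le (b := fun p q => L * ‖p.1 - q.1‖ + (T + 1) * σ ‖p.1 - q.1‖ +
      C * |p.2 - q.2|) (fun p _ => tendsto_nhdsWithin_of_tendsto_nhds ?_) fun k p hp q hq => ?_)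
  · have hp0 := htime k p.1 hp.1 p.2 hp.2 0 ⟨le_rfl, hp.2.1.trans hp.2.2⟩
    rw [(hZ k).rotheInterp_zero, sub_zero, sub_zero, abs_of_nonneg hp.2.1] at hp0
    exact hp0.trans (mul_le_mul (le_abs_self C) hp.2.2 hp.2.1 (abs_nonneg C))
  · have hnorm : Tendsto (fun q : Eucl d × ℝ => ‖p.1 - q.1‖) (𝓝 p) (𝓝 0) := by
      have hcont : Continuous fun q : Eucl d × ℝ => ‖p.1 - q.1‖ := by fun_prop
      simpa using hcont.tendsto p
    have habs : Tendsto (fun q : Eucl d × ℝ => |p.2 - q.2|) (𝓝 p) (𝓝 0) := by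
      have hcont : Continuous fun q : Eucl d × ℝ => |p.2 - q.2| := by fun_prop
      simpa using hcont.tendsto p
    simpa using ((hnorm.const_mul L).add ((hσ.comp hnorm).const_mul (T + 1))).add
      (habs.const_mul C)
  · exact (abs_sub_le _ (rotheInterp (Z k) (hk k) q.1 p.2) _).trans
      (add_le_add (hspace k p.1 hp.1 q.1 hq.1 p.2 hp.2) (htime k q.1 hq.1 p.2 hp.2 q.2 hq.2))

theorem rothe_limit_exists_general (hlam : 0 < lam) (hLam : 0 ≤ Lam) (hgam : 0 ≤ gam)
    (hC₀ : 0 ≤ C₀) (hK : 0 ≤ K) (hΩ : IsOpen Ω) (hΩb : Bornology.IsBounded Ω) (hR : 0 < R)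
    (hball : UniformExteriorBall Ω R) (hF : UniformlyElliptic lam Lam (closure Ω) (Ici 0) F)
    (hS : StructureCondition lam Lam gam ω (closure Ω) (Ici 0) F)
    (hσ : Tendsto σ (𝓝 0) (𝓝 0)) (hmod : HasSpaceTimeModulus σ C₀ (closure Ω) (Ici 0) F)
    (hFK : ∀ x ∈ closure Ω, ∀ t ∈ Ici (0 : ℝ), |F 0 0 0 x t| ≤ K) {Z : ℝ → ℕ → Eucl d → ℝ}
    (hZ : ∀ h ∈ Ioc (0 : ℝ) 1, IsRotheScheme Ω F h (Z h)) (T : ℝ) :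
    ∃ C : ℝ, ∀ hk : ℕ → ℝ, (∀ k, hk k ∈ Ioc (0 : ℝ) 1) →
      (∃ ψ : ℕ → ℕ, StrictMono ψ ∧
        ∃ U : Eucl d × ℝ → ℝ, ContinuousOn U (closure Ω ×ˢ Icc 0 T) ∧
          TendstoUniformlyOn
            (fun k (p : Eucl d × ℝ) => rotheInterp (Z (hk (ψ k))) (hk (ψ k)) p.1 p.2)
            U atTop (closure Ω ×ˢ Icc 0 T)) ∧
      ∀ U : Eucl d × ℝ → ℝ,
        (∀ p ∈ closure Ω ×ˢ Icc 0 T,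
          Tendsto (fun k => rotheInterp (Z (hk k)) (hk k) p.1 p.2) atTop (𝓝 (U p))) →
        ∀ x ∈ closure Ω, ∀ t ∈ Icc 0 T, ∀ s ∈ Icc 0 T,
          |U (x, t) - U (x, s)| ≤ C * |t - s| := by
  have hprop := hF.properElliptic hS hlam.le hLam hgam
  obtain ⟨L, hL, hbd⟩ :=
    hF.exists_abs_rothe_le_mul_norm_sub hS hlam hLam hgam hK hFK hΩ hΩb hR hball
  refine ⟨K + C₀ * T, fun hk hhk => ?_⟩
  have hscheme (k : ℕ) : IsRotheScheme Ω F (hk k) (Z (hk k)) := hZ _ (hhk k)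
  have htime (k : ℕ) : ∀ x ∈ closure Ω, ∀ t ∈ Icc 0 T, ∀ s ∈ Icc 0 T,
      |rotheInterp (Z (hk k)) (hk k) x t - rotheInterp (Z (hk k)) (hk k) x s|
        ≤ (K + C₀ * T) * |t - s| := fun x hx t ht s hs =>
    (hscheme k).abs_rotheInterp_sub_le_time (hhk k) hΩ hΩb hprop hmod hσ hC₀ hK hFK hx ht hs
  refine ⟨?_, fun U hU x hx t ht s hs => ?_⟩
  · exact exists_subseq_tendstoUniformlyOn_rotheInterp hσ hΩb hscheme htime
      fun k x hx y hy t ht => (hscheme k).abs_rotheInterp_sub_le_space (hhk k) hΩ hΩb hprop hmod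
        hσ hL (hbd _ (hhk k).1 _ (hscheme k)) hx hy ht
  · exact le_of_tendsto ((hU (x, t) ⟨hx, ht⟩).sub (hU (x, s) ⟨hx, hs⟩)).abs
      (Eventually.of_forall fun k => htime k x hx t ht s hs)

end Limit

/-- **Existence of the Rothe limit.**  Under the standing hypotheses, every sequence
`h_k ↓ 0` admits a subsequence along which the Rothe interpolants converge uniformly on
`closure Ω × [0,T]` to a continuous limit, and there is a constant `C`, independent of the
sequence and of the limit, such that any such uniform limit `U` satisfies
`|U(x,t) - U(x,s)| ≤ C|t - s|`. -/
theorem rothe_limit_exists (d : ℕ) (T lam Lam gam C₀ K : ℝ)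
    (hT : 0 < T) (hlam : 0 < lam) (hlL : lam ≤ Lam) (hgam : 0 ≤ gam)
    (hC₀ : 0 ≤ C₀) (hK : 0 ≤ K)
    (Ω : Set (Eucl d)) (hΩopen : IsOpen Ω) (hΩbdd : Bornology.IsBounded Ω)
    (hΩsm : HasSmoothBoundary Ω)
    (F : Matrix (Fin d) (Fin d) ℝ → Eucl d → ℝ → Eucl d → ℝ → ℝ)
    (ω : ℝ → ℝ → ℝ) (σ₁ σ₂ : ℝ → ℝ)
    (hFcont : ContinuousOn
      (fun q : Matrix (Fin d) (Fin d) ℝ × Eucl d × ℝ × Eucl d × ℝ =>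
        F q.1 q.2.1 q.2.2.1 q.2.2.2.1 q.2.2.2.2)
      (univ ×ˢ univ ×ˢ univ ×ˢ closure Ω ×ˢ Ici 0))
    (hUE : UniformlyElliptic lam Lam (closure Ω) (Ici 0) F)
    (hStruct : StructureCondition lam Lam gam ω (closure Ω) (Ici 0) F)
    (hσ₁ : IsModulus σ₁) (hσ₂ : IsModulus σ₂)
    (hjoint : ∀ (M : Matrix (Fin d) (Fin d) ℝ) (P : Eucl d) (r : ℝ),
      ∀ x ∈ closure Ω, ∀ y ∈ closure Ω, ∀ t ∈ Ici (0:ℝ), ∀ s ∈ Ici (0:ℝ),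
        |F M P r x t - F M P r y s| ≤ σ₁ ‖x - y‖ + σ₂ |t - s|)
    (hσ₂lin : ∀ h ∈ Ioc (0:ℝ) 1, σ₂ h ≤ C₀ * h)
    (hFK : ∀ x ∈ closure Ω, ∀ t ∈ Ici (0:ℝ), |F 0 0 0 x t| ≤ K)
    (Z : ℝ → ℕ → Eucl d → ℝ)
    (hZ : ∀ h ∈ Ioc (0:ℝ) 1, (∀ x, Z h 0 x = 0) ∧
      ∀ m : ℕ, RotheStep Ω F h m (Z h m) (Z h (m + 1))) :
    ∃ C : ℝ,
      (∀ hk : ℕ → ℝ, (∀ k, hk k ∈ Ioc (0:ℝ) 1) → Antitone hk →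
          Tendsto hk atTop (nhds 0) →
        ∃ ψ : ℕ → ℕ, StrictMono ψ ∧
          ∃ U : Eucl d × ℝ → ℝ, ContinuousOn U (closure Ω ×ˢ Icc 0 T) ∧
            TendstoUniformlyOn
              (fun k (p : Eucl d × ℝ) => rotheInterp (Z (hk (ψ k))) (hk (ψ k)) p.1 p.2)
              U atTop (closure Ω ×ˢ Icc 0 T)) ∧
      (∀ hk : ℕ → ℝ, (∀ k, hk k ∈ Ioc (0:ℝ) 1) → Antitone hk →
          Tendsto hk atTop (nhds 0) →
        ∀ U : Eucl d × ℝ → ℝ,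
          TendstoUniformlyOn
            (fun k (p : Eucl d × ℝ) => rotheInterp (Z (hk k)) (hk k) p.1 p.2)
            U atTop (closure Ω ×ˢ Icc 0 T) →
          ∀ x ∈ closure Ω, ∀ t ∈ Icc (0:ℝ) T, ∀ s ∈ Icc (0:ℝ) T,
            |U (x, t) - U (x, s)| ≤ C * |t - s|) := by
  obtain ⟨R, hR, hball⟩ := hΩsm.exists_uniformExteriorBall hΩbdd
  have hmod : HasSpaceTimeModulus σ₁ C₀ (closure Ω) (Ici 0) F := by
    intro M P r x hx y hy t ht s hs hts
    refine (hjoint M P r x hx y hy t ht s hs).trans ?_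
    gcongr
    rcases (abs_nonneg (t - s)).eq_or_lt with h0 | hpos
    · simp [← h0, hσ₂.2.2]
    · exact hσ₂lin _ ⟨hpos, hts⟩
  obtain ⟨C, hC⟩ := rothe_limit_exists_general hlam (hlam.le.trans hlL) hgam hC₀ hK hΩopen
    hΩbdd hR hball hUE hStruct (by simpa [hσ₁.2.2] using hσ₁.2.1.tendsto 0) hmod hFK
    (fun h hh => ⟨(hZ h hh).1, (hZ h hh).2⟩) T
  exact ⟨C, fun hk hhk _ _ => (hC hk hhk).1,
    fun hk hhk _ _ U hU => (hC hk hhk).2 U fun _ => hU.tendsto_at⟩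

end
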